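/- arXiv:2601.04324 — 3 statements merged into one kernel-verified Lean document; each statement's English description precedes it below -/
import Mathlib

section
/- Let n ∈ ℕ, p ∈ (1,∞), and let μ ∈ A_p on ℝⁿ. Let φ ∈ C_c^∞(B₁) satisfy 0 ≤ φ ≤ 1 and ∫_{ℝⁿ} φ(x) dx = 1, and for ε > 0 set φ_ε(x) = ε^{−n} φ(x/ε) and μ_ε = μ * φ_ε. Then for every R₀ > 0 and every ε ∈ (0,1), one has [[μ_ε]]_{BMO(B_{R₀}, μ_ε)} ≤ [[μ]]_{BMO(B_{R₀+1}, μ)}. -/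
open MeasureTheory Metric Set
open scoped ENNReal Topology

noncomputable section

abbrev En (n : ℕ) : Type := EuclideanSpace ℝ (Fin n)

/-- Lebesgue average of `f` over the ball `B_r(y)`. -/
def ballAvg (n : ℕ) (f : En n → ℝ) (y : En n) (r : ℝ) : ℝ :=
  ⨍ x in ball y r, f x

/-- Muckenhoupt `A_p` characteristic. -/
def apNorm (n : ℕ) (p : ℝ) (μ : En n → ℝ) : ℝ≥0∞ :=
  ⨆ (y : En n) (r : ℝ) (_ : 0 < r),
    ENNReal.ofReal
      ((ballAvg n μ y r) *
        (ballAvg n (fun x => μ x ^ (-(1 : ℝ) / (p - 1))) y r) ^ (p - 1))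

/-- Weighted mean oscillation `[[f]]_{BMO(Ω, μ)}`. -/
def wBMO (n : ℕ) (Ω : Set (En n)) (μ f : En n → ℝ) : ℝ≥0∞ :=
  ⨆ (y : En n) (r : ℝ) (_ : 0 < r) (_ : ball y r ⊆ Ω),
    ENNReal.ofReal
      ((∫ x in ball y r, |f x - ballAvg n f y r|) / (∫ x in ball y r, μ x))

/-- `(ω^{-n})_{B_r(y)}`, the average of `ω^{-n}` over `B_r(y)`. -/
def invAvg (n : ℕ) (ω : En n → ℝ) (y : En n) (r : ℝ) : ℝ :=
  ballAvg n (fun x => ω x ^ (-(n : ℝ))) y r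

/-- The height `r² (ω^{-n})_{B_r(y)}^{1/n}` of the weighted parabolic cylinders. -/
def cylHeight (n : ℕ) (ω : En n → ℝ) (y : En n) (r : ℝ) : ℝ :=
  r ^ 2 * invAvg n ω y r ^ ((n : ℝ)⁻¹)

/-- The weighted parabolic cylinder `C_{r,ω}(y,s)`. -/
def cylC (n : ℕ) (ω : En n → ℝ) (y : En n) (s r : ℝ) : Set (En n × ℝ) :=
  ball y r ×ˢ Ioo (s - cylHeight n ω y r) s

/-- The weighted parabolic cylinder `Q_{r,ω}(y,s)`. -/
def cylQ (n : ℕ) (ω : En n → ℝ) (y : En n) (s r : ℝ) : Set (En n × ℝ) :=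
  ball y r ×ˢ Ioo (s - cylHeight n ω y r) (s + cylHeight n ω y r)

/-- Parabolic boundary of the cylinder `B_r(y) × (a, b)`. -/
def parBdry (n : ℕ) (y : En n) (r a b : ℝ) : Set (En n × ℝ) :=
  (sphere y r ×ˢ Ioo a b) ∪ (closedBall y r ×ˢ ({a} : Set ℝ))

/-- Parabolic boundary of `C_{r,ω}(y,s)`. -/
def parBdryC (n : ℕ) (ω : En n → ℝ) (y : En n) (s r : ℝ) : Set (En n × ℝ) :=
  parBdry n y r (s - cylHeight n ω y r) s

/-- Parabolic boundary of `Q_{r,ω}(y,s)`. -/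
def parBdryQ (n : ℕ) (ω : En n → ℝ) (y : En n) (s r : ℝ) : Set (En n × ℝ) :=
  parBdry n y r (s - cylHeight n ω y r) (s + cylHeight n ω y r)

/-- Time derivative `u_t`. -/
def pderivT (n : ℕ) (u : En n × ℝ → ℝ) (p : En n × ℝ) : ℝ :=
  deriv (fun t => u (p.1, t)) p.2

/-- First spatial partial derivative `D_i u`. -/
def pderivX (n : ℕ) (u : En n × ℝ → ℝ) (i : Fin n) (p : En n × ℝ) : ℝ :=
  fderiv ℝ (fun x => u (x, p.2)) p.1 (EuclideanSpace.single i 1)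

/-- Second spatial partial derivative `D_{ij} u`. -/
def pderivXX (n : ℕ) (u : En n × ℝ → ℝ) (i j : Fin n) (p : En n × ℝ) : ℝ :=
  pderivX n (fun q => pderivX n u j q) i p

/-- Frobenius norm `|D²u|` of the spatial Hessian. -/
def hessNorm (n : ℕ) (u : En n × ℝ → ℝ) (p : En n × ℝ) : ℝ :=
  Real.sqrt (∑ i, ∑ j, (pderivXX n u i j p) ^ 2)

/-- The operator `L u = u_t − ω(x) a_{ij}(x,t) D_{ij} u`. -/
def parOp (n : ℕ) (ω : En n → ℝ) (a : Fin n → Fin n → En n × ℝ → ℝ)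
    (u : En n × ℝ → ℝ) (p : En n × ℝ) : ℝ :=
  pderivT n u p - ω p.1 * ∑ i, ∑ j, a i j p * pderivXX n u i j p

/-- Membership in the weighted Sobolev space `W^{2,1}_{n+1}(U, ω)`. -/
def MemW21 (n : ℕ) (U : Set (En n × ℝ)) (ω : En n → ℝ) (u : En n × ℝ → ℝ) : Prop :=
  LocallyIntegrableOn u U ∧
  (∀ i j : Fin n,
    IntegrableOn (fun p => |pderivXX n u i j p| ^ ((n : ℝ) + 1) * ω p.1) U) ∧
  IntegrableOn (fun p => |pderivT n u p| ^ ((n : ℝ) + 1) * (ω p.1) ^ (-(n : ℝ))) U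

/-- Symmetry, uniform ellipticity and boundedness of the coefficients `(a_{ij})`. -/
def Elliptic (n : ℕ) (ν : ℝ) (a : Fin n → Fin n → En n × ℝ → ℝ) : Prop :=
  (∀ i j p, a i j p = a j i p) ∧
  (∀ (p : En n × ℝ) (ξ : En n), ν * ‖ξ‖ ^ 2 ≤ ∑ i, ∑ j, a i j p * ξ i * ξ j) ∧
  (∀ i j p, |a i j p| ≤ ν⁻¹)

/-- Weighted measure `ω(U) = ∫_U ω(x) dx dt` of a space-time set. -/
def wMeasST (n : ℕ) (ω : En n → ℝ) (U : Set (En n × ℝ)) : ℝ :=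
  ∫ p in U, ω p.1

/-- The class `𝕃^∞_{ν,k}(K₀)` of operators with smooth truncated coefficients. -/
def SmoothClass (n k : ℕ) (ν K₀ : ℝ) (ω : En n → ℝ)
    (a : Fin n → Fin n → En n × ℝ → ℝ) : Prop :=
  ContDiff ℝ (⊤ : ℕ∞) ω ∧ (∀ i j, ContDiff ℝ (⊤ : ℕ∞) (a i j)) ∧
  (∀ x, (k : ℝ)⁻¹ ≤ ω x ∧ ω x ≤ k) ∧
  apNorm n (1 + (n : ℝ)⁻¹) ω ≤ ENNReal.ofReal K₀ ∧
  Elliptic n ν a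


/-- Mollification `μ_ε = μ * φ_ε` of a weight, with `φ_ε(y) = ε^{-n} φ(y/ε)`. -/
def mollify (n : ℕ) (φ μ : En n → ℝ) (ε : ℝ) : En n → ℝ :=
  fun x => ∫ y, (ε ^ n)⁻¹ * φ (ε⁻¹ • y) * μ (x - y)

/-!
Fubini's theorem shows that averaging functions over a parameter can only decrease their
`L¹` oscillation on a fixed ball. The convolution `k ⋆ f` averages the translates `f (· - z)` with
weights `k z ≥ 0`, and on a ball `B` the translate oscillates as much as `f` does on `B - z`. If `k`
lives in the ball of radius `δ`, then `B - z` stays in the `δ`-neighbourhood of `Ω ⊇ B`, so a bound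
of the oscillation of `f` by a multiple of the mass of `w` on such balls is inherited by `k ⋆ f` and
`k ⋆ w`.
-/

open scoped Convolution

section Average

variable {X Z E : Type*} [MeasurableSpace X] [MeasurableSpace Z]
  [NormedAddCommGroup E] [NormedSpace ℝ E] {ν : Measure X} {κ : Measure Z} {F : X → Z → E}

lemma integrable_average_left [SFinite ν] [SFinite κ]
    (hF : Integrable (Function.uncurry F) (ν.prod κ)) :
    Integrable (fun z => ⨍ x, F x z ∂ν) κ := by
  simp only [average_eq]
  exact hF.integral_prod_right.smul _

lemma average_integral_swap [SFinite ν] [SFinite κ]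
    (hF : Integrable (Function.uncurry F) (ν.prod κ)) :
    ⨍ x, ∫ z, F x z ∂κ ∂ν = ∫ z, ⨍ x, F x z ∂ν ∂κ := by
  simp only [average_eq]
  rw [integral_smul, integral_integral_swap hF]

lemma integral_norm_integral_sub_average_le [IsFiniteMeasure ν] [SFinite κ]
    (hF : Integrable (Function.uncurry F) (ν.prod κ)) :
    ∫ x, ‖∫ z, F x z ∂κ - ⨍ x', ∫ z, F x' z ∂κ ∂ν‖ ∂ν ≤
      ∫ z, ∫ x, ‖F x z - ⨍ x', F x' z ∂ν‖ ∂ν ∂κ := by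
  have avg_integrable := integrable_average_left hF
  have osc_integrable : Integrable
      (Function.uncurry fun x z => ‖F x z - ⨍ x', F x' z ∂ν‖) (ν.prod κ) :=
    (hF.sub (avg_integrable.comp_snd ν)).norm
  rw [average_integral_swap hF, ← integral_integral_swap osc_integrable]
  refine integral_mono_ae (hF.integral_prod_left.sub (integrable_const _)).norm
    osc_integrable.integral_prod_left ?_
  filter_upwards [hF.prod_right_ae] with x hx
  calc
    _ = ‖∫ z, (F x z - ⨍ x', F x' z ∂ν) ∂κ‖ :=
      congrArg norm (integral_sub hx avg_integrable).symm
    _ ≤ ∫ z, ‖F x z - ⨍ x', F x' z ∂ν‖ ∂κ := norm_integral_le_integral_norm _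

end Average

section Translation

variable {G E : Type*} [SeminormedAddCommGroup G] {δ : ℝ}

lemma sub_mem_thickening {s : Set G} {x z : G} (hx : x ∈ s) (hz : z ∈ ball 0 δ) :
    x - z ∈ thickening δ s :=
  mem_thickening_iff.2 ⟨x, hx, by simpa [dist_eq_norm] using hz⟩

lemma ball_sub_subset_thickening {s : Set G} {y z : G} {r : ℝ} (hs : ball y r ⊆ s)
    (hz : z ∈ ball 0 δ) : ball (y - z) r ⊆ thickening δ s := by
  intro x hx
  have hxz : x + z ∈ s := hs (by rwa [mem_ball, ← dist_sub_right _ _ z, add_sub_cancel_right])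
  simpa using sub_mem_thickening hxz hz

variable [MeasurableSpace G] [BorelSpace G] [NormedAddCommGroup E] [NormedSpace ℝ E]
  {m : Measure G} [m.IsAddRightInvariant]

lemma setIntegral_ball_comp_sub_right (f : G → E) (y z : G) (r : ℝ) :
    ∫ x in ball y r, f (x - z) ∂m = ∫ x in ball (y - z) r, f x ∂m := by
  rw [← (measurePreserving_sub_right m z).setIntegral_preimage_emb
    (MeasurableEquiv.subRight z).measurableEmbedding f (ball (y - z) r)]
  congr 2
  ext x
  simp

lemma setAverage_ball_comp_sub_right (f : G → E) (y z : G) (r : ℝ) :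
    ⨍ x in ball y r, f (x - z) ∂m = ⨍ x in ball (y - z) r, f x ∂m := by
  have measureReal_ball : m.real (ball y r) = m.real (ball (y - z) r) := by
    simpa using setIntegral_ball_comp_sub_right (m := m) (fun _ => (1 : ℝ)) y z r
  rw [setAverage_eq, setAverage_eq, setIntegral_ball_comp_sub_right, measureReal_ball]

lemma setIntegral_ball_norm_smul_comp_sub_sub_average (c : ℝ) (f : G → E) (y z : G) (r : ℝ) :
    ∫ x in ball y r, ‖c • f (x - z) - ⨍ x' in ball y r, c • f (x' - z) ∂m‖ ∂m =
      |c| * ∫ x in ball (y - z) r, ‖f x - ⨍ x' in ball (y - z) r, f x' ∂m‖ ∂m := by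
  have average_smul : ⨍ x in ball y r, c • f (x - z) ∂m =
      c • ⨍ x in ball (y - z) r, f x ∂m := by
    rw [← setAverage_ball_comp_sub_right, average_eq, average_eq, integral_smul, smul_comm]
  simp only [average_smul, ← smul_sub, norm_smul, Real.norm_eq_abs]
  rw [integral_const_mul,
    setIntegral_ball_comp_sub_right fun x => ‖f x - ⨍ x' in ball (y - z) r, f x' ∂m‖]

lemma integrable_convolution_integrand_restrict [ProperSpace G] [SFinite m] {k : G → ℝ}
    {f : G → E} {s : Set G} (hk : Integrable k m) (hksupp : Function.support k ⊆ ball 0 δ)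
    (hf : LocallyIntegrable f m) (hs : Bornology.IsBounded s) (hsm : MeasurableSet s) :
    Integrable (Function.uncurry fun x z => k z • f (x - z)) ((m.restrict s).prod m) := by
  have truncated_integrable : Integrable ((thickening δ s).indicator f) m :=
    ((hf.integrableOn_isCompact hs.thickening.isCompact_closure).mono_set
      subset_closure).integrable_indicator isOpen_thickening.measurableSet
  refine ((hk.convolution_integrand (ContinuousLinearMap.lsmul ℝ ℝ)
    truncated_integrable).mono_measure (Measure.prod_mono Measure.restrict_le_self le_rfl)).congr ?_
  filter_upwards [Measure.quasiMeasurePreserving_fst.ae (ae_restrict_mem hsm)] with ⟨x, z⟩ hx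
  by_cases hz : k z = 0
  · simp [hz]
  · simp [indicator_of_mem (sub_mem_thickening hx (hksupp hz))]

end Translation

section Oscillation

variable {n : ℕ} {Ω Ω' : Set (En n)} {k w f μ : En n → ℝ} {M δ : ℝ}

/-- On every ball `B ⊆ Ω` the oscillation `∫_B |f - f_B|` is at most `M w(B)`. This is the estimate
`[[f]]_{BMO(Ω, w)} ≤ M` with the denominator cleared, so that it is also meaningful (and forces `f`
to be a.e. constant) on balls with `w(B) = 0`, which the quotient in `wBMO` ignores. -/
def HasOscillationBound (Ω : Set (En n)) (w f : En n → ℝ) (M : ℝ) : Prop :=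
  ∀ ⦃y : En n⦄ ⦃r : ℝ⦄, 0 < r → ball y r ⊆ Ω →
    ∫ x in ball y r, |f x - ballAvg n f y r| ≤ M * ∫ x in ball y r, w x

lemma wBMO_mono (h : Ω ⊆ Ω') : wBMO n Ω w f ≤ wBMO n Ω' w f :=
  iSup₂_mono fun _ _ => iSup_mono fun _ => iSup_mono' fun hsub => ⟨hsub.trans h, le_rfl⟩

lemma HasOscillationBound.wBMO_le (h : HasOscillationBound Ω w f M) (hw : ∀ x, 0 ≤ w x)
    (hM : 0 ≤ M) : wBMO n Ω w f ≤ ENNReal.ofReal M :=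
  iSup₂_le fun _ _ => iSup₂_le fun hr hsub =>
    ENNReal.ofReal_le_ofReal (div_le_of_le_mul₀ (integral_nonneg hw) hM (h hr hsub))

lemma hasOscillationBound_toReal_wBMO (hμ0 : ∀ x, 0 ≤ μ x) (hfin : wBMO n Ω μ μ ≠ ⊤) :
    HasOscillationBound Ω μ μ (wBMO n Ω μ μ).toReal := by
  intro y r hr hsub
  rcases (integral_nonneg hμ0 : 0 ≤ ∫ x in ball y r, μ x).eq_or_lt with hzero | hpos
  · have ballAvg_eq_zero : ballAvg n μ y r = 0 := by
      rw [ballAvg, average_eq, ← hzero, smul_zero]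
    simp only [ballAvg_eq_zero, sub_zero, abs_of_nonneg (hμ0 _), ← hzero, mul_zero, le_refl]
  · rw [← div_le_iff₀ hpos, ← ENNReal.ofReal_le_iff_le_toReal hfin]
    exact le_iSup₂_of_le y r (le_iSup₂_of_le hr hsub le_rfl)

lemma HasOscillationBound.convolution (h : HasOscillationBound (thickening δ Ω) w f M)
    (hk : Integrable k) (hk0 : ∀ z, 0 ≤ k z) (hksupp : Function.support k ⊆ ball 0 δ)
    (hw : LocallyIntegrable w) (hf : LocallyIntegrable f) :
    HasOscillationBound Ω (k ⋆ w) (k ⋆ f) M := by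
  intro y r hr hsub
  have fiber_bound (z : En n) :
      ∫ x in ball y r, ‖k z • f (x - z) - ⨍ x' in ball y r, k z • f (x' - z)‖ ≤
        M * ∫ x in ball y r, k z • w (x - z) := by
    rw [setIntegral_ball_norm_smul_comp_sub_sub_average, integral_smul,
      setIntegral_ball_comp_sub_right, abs_of_nonneg (hk0 z), smul_eq_mul, mul_left_comm]
    by_cases hz : k z = 0
    · simp [hz]
    · exact mul_le_mul_of_nonneg_left (h hr (ball_sub_subset_thickening hsub (hksupp hz))) (hk0 z)
  have hkf := integrable_convolution_integrand_restrict hk hksupp hf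
    (isBounded_ball (x := y) (r := r)) measurableSet_ball
  have hkw := integrable_convolution_integrand_restrict hk hksupp hw
    (isBounded_ball (x := y) (r := r)) measurableSet_ball
  have : IsFiniteMeasure ((volume : Measure (En n)).restrict (ball y r)) :=
    isFiniteMeasure_restrict.2 measure_ball_ne_top
  calc
    _ ≤ ∫ z, ∫ x in ball y r, ‖k z • f (x - z) - ⨍ x' in ball y r, k z • f (x' - z)‖ :=
      integral_norm_integral_sub_average_le hkf
    _ ≤ ∫ z, M * ∫ x in ball y r, k z • w (x - z) :=
      integral_mono_of_nonneg (ae_of_all _ fun _ => integral_nonneg fun _ => norm_nonneg _)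
        (hkw.integral_prod_right.const_mul M) (ae_of_all _ fiber_bound)
    _ = M * ∫ x in ball y r, (k ⋆ w) x := by
      rw [integral_const_mul, ← integral_integral_swap hkw]
      rfl

theorem wBMO_convolution_le (hμ0 : ∀ x, 0 ≤ μ x) (hμ : LocallyIntegrable μ)
    (hk : Integrable k) (hk0 : ∀ z, 0 ≤ k z) (hksupp : Function.support k ⊆ ball 0 δ) :
    wBMO n Ω (k ⋆ μ) (k ⋆ μ) ≤ wBMO n (thickening δ Ω) μ μ := by
  by_cases hfin : wBMO n (thickening δ Ω) μ μ = ⊤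
  · exact hfin ▸ le_top
  have conv_nonneg (x : En n) : 0 ≤ (k ⋆ μ) x :=
    integral_nonneg fun z => mul_nonneg (hk0 z) (hμ0 _)
  rw [← ENNReal.ofReal_toReal hfin]
  exact ((hasOscillationBound_toReal_wBMO hμ0 hfin).convolution hk hk0 hksupp hμ hμ).wBMO_le
    conv_nonneg ENNReal.toReal_nonneg

end Oscillation

section Mollifier

variable {n : ℕ} {φ : En n → ℝ} {ε : ℝ}

/-- The kernel `φ_ε(y) = ε^{-n} φ(y/ε)` whose convolution with a weight is `mollify`. -/
def rescaledKernel (φ : En n → ℝ) (ε : ℝ) (y : En n) : ℝ :=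
  (ε ^ n)⁻¹ * φ (ε⁻¹ • y)

lemma mollify_eq_convolution (φ μ : En n → ℝ) (ε : ℝ) :
    mollify n φ μ ε = rescaledKernel φ ε ⋆ μ :=
  rfl

lemma integrable_rescaledKernel (hφ : Integrable φ) (hε : ε ≠ 0) :
    Integrable (rescaledKernel φ ε) :=
  (hφ.comp_smul (inv_ne_zero hε)).const_mul _

lemma rescaledKernel_nonneg (hφ0 : ∀ x, 0 ≤ φ x) (hε : 0 ≤ ε) (y : En n) :
    0 ≤ rescaledKernel φ ε y :=
  mul_nonneg (by positivity) (hφ0 _)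

lemma support_rescaledKernel_subset (hφ : Function.support φ ⊆ ball 0 1) (hε : 0 < ε) :
    Function.support (rescaledKernel φ ε) ⊆ ball 0 ε := by
  intro y hy
  have hφy : ε⁻¹ • y ∈ ball (0 : En n) 1 := hφ (right_ne_zero_of_mul hy)
  rwa [mem_ball_zero_iff, norm_smul, norm_inv, Real.norm_of_nonneg hε.le, inv_mul_lt_one₀ hε,
    ← mem_ball_zero_iff] at hφy

end Mollifier

theorem statement12_general {n : ℕ} {μ φ : En n → ℝ} (hμ0 : ∀ x, 0 ≤ μ x)
    (hμ : LocallyIntegrable μ) (hφ : Integrable φ) (hφ0 : ∀ x, 0 ≤ φ x)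
    (hφsupp : Function.support φ ⊆ ball 0 1) (Ω : Set (En n)) {ε : ℝ} (hε : 0 < ε) :
    wBMO n Ω (mollify n φ μ ε) (mollify n φ μ ε) ≤ wBMO n (thickening ε Ω) μ μ := by
  rw [mollify_eq_convolution]
  exact wBMO_convolution_le hμ0 hμ (integrable_rescaledKernel hφ hε.ne')
    (rescaledKernel_nonneg hφ0 hε.le) (support_rescaledKernel_subset hφsupp hε)

/-- Stability of the weighted mean oscillation under mollification (Proposition 2.7). -/
theorem statement12
    (n : ℕ) (hn : 0 < n) (p : ℝ) (hp : 1 < p) (μ φ : En n → ℝ)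
    (hμ0 : ∀ x, 0 ≤ μ x) (hμloc : LocallyIntegrable μ)
    (hμAp : apNorm n p μ < ⊤)
    (hφsm : ContDiff ℝ (⊤ : ℕ∞) φ) (hφsupp : HasCompactSupport φ)
    (hφball : tsupport φ ⊆ ball (0 : En n) 1)
    (hφ0 : ∀ x, 0 ≤ φ x) (hφ1 : ∀ x, φ x ≤ 1)
    (hφint : ∫ x, φ x = 1) :
    ∀ R₀ : ℝ, 0 < R₀ → ∀ ε : ℝ, 0 < ε → ε < 1 →
      wBMO n (ball (0 : En n) R₀) (mollify n φ μ ε) (mollify n φ μ ε) ≤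
        wBMO n (ball (0 : En n) (R₀ + 1)) μ μ := by
  intro R₀ _ ε hε hε1
  have hφ : Integrable φ := hφsm.continuous.integrable_of_hasCompactSupport hφsupp
  exact (statement12_general hμ0 hμloc hφ hφ0 ((subset_tsupport φ).trans hφball) _ hε).trans
    (wBMO_mono ((thickening_ball 0 ε R₀).trans (ball_subset_ball (by linarith))))

end
end

section
/- Let n ∈ ℕ and K₀ ≥ 1. There exists a constant N = N(n,K₀) > 0 such that for every μ ∈ A₂ on ℝⁿ with [μ]_{A₂} ≤ K₀, the reciprocal weight β(x) = μ(x)^{−1} satisfies [[β]]_{BMO(B_{R₀}, β)} ≤ N [[μ]]_{BMO(B_{R₀}, μ)} for every R₀ > 0. -/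
open MeasureTheory Metric Set
open scoped ENNReal Topology

noncomputable section

/-!
Suppose first that `w` has small relative oscillation `δ`. Nested balls of comparable radii then
have means within a factor `1 + O(δ)`. Let `m` be the mean of `w` over a ball. A stopping-time
argument with the Besicovitch covering theorem shows that, on the concentric ball of half the
radius, the set `{w < m / 2 ^ k}` occupies a proportion at most `(C δ) ^ k`; summing over `k`, the
integral of `(m - w)₊ / w` there is `O(δ)` times the measure of the ball. To reach the full ball,
cut it into Whitney layers at distance about `r / 2 ^ k` from the boundary: the local means lose at
most a factor `1 + O(δ (3 / 2) ^ k)`, but the layers have measure `O(2 ^ (-k))`, so the sum over `k`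
converges. Hence the mean of `|w⁻¹ - m⁻¹|` is `O(δ) m⁻¹`, and `w⁻¹` has relative oscillation `O(δ)`.
For large `δ` the trivial bound `2` on the relative oscillation of a nonnegative function suffices.
-/

open Filter
open scoped NNReal
open Module (finrank)

/-! ### Elementary inequalities -/

lemma ofReal_sub_div_le_add_tsum_indicator {α : Type*} {f : α → ℝ} (m : ℝ) {x : α}
    (hx : 0 ≤ f x) :
    ENNReal.ofReal ((m - f x) / f x) ≤ 4 * ENNReal.ofReal (|f x - m| / m) +
      ∑' k : ℕ, {z | f z < m / 2 ^ (k + 1)}.indicator (fun _ => (2 : ℝ≥0∞) ^ (k + 3)) x := by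
  set a := f x
  rcases hx.eq_or_lt with ha₀ | ha₀
  · simp [← ha₀]
  rcases le_or_gt m 0 with hm | hm
  · rw [ENNReal.ofReal_of_nonpos (div_nonpos_of_nonpos_of_nonneg (by linarith) hx)]
    exact zero_le
  rcases le_or_gt m (4 * a) with hma | hma
  · refine le_add_right ?_
    rw [← ENNReal.ofReal_ofNat 4, ← ENNReal.ofReal_mul (by norm_num)]
    refine ENNReal.ofReal_le_ofReal ?_
    rw [← mul_div_assoc, div_le_div_iff₀ ha₀ hm]
    nlinarith [neg_le_abs (a - m), abs_nonneg (a - m)]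
  · refine le_add_left ?_
    obtain ⟨k, hklt, hkle⟩ := exists_nat_pow_near_of_lt_one (x := 4 * a / m) (y := 1 / 2)
      (by positivity) ((div_le_one hm).2 hma.le) (by norm_num) (by norm_num)
    rw [div_pow, one_pow, lt_div_iff₀ hm, div_mul_eq_mul_div, div_lt_iff₀ (by positivity)] at hklt
    rw [div_pow, one_pow, div_le_div_iff₀ hm (by positivity)] at hkle
    have hmem : x ∈ {z | f z < m / 2 ^ (k + 1)} := by
      change a < m / 2 ^ (k + 1)
      rw [lt_div_iff₀ (by positivity), pow_succ]
      linarith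
    calc ENNReal.ofReal ((m - a) / a) ≤ ENNReal.ofReal (2 ^ (k + 3)) := by
          refine ENNReal.ofReal_le_ofReal ?_
          rw [div_le_iff₀ ha₀]
          rw [pow_succ] at hklt ⊢
          rw [pow_succ, pow_succ]
          linarith
      _ = {z | f z < m / 2 ^ (k + 1)}.indicator (fun _ => (2 : ℝ≥0∞) ^ (k + 3)) x := by
          rw [indicator_of_mem hmem, ENNReal.ofReal_pow zero_le_two, ENNReal.ofReal_ofNat]
      _ ≤ _ := ENNReal.le_tsum k

lemma ofReal_sub_div_le_of_le_mul {a b m : ℝ} {c : ℝ≥0} (hb : 0 ≤ b) (hm : m ≤ (1 + c) * a) :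
    ENNReal.ofReal ((m - b) / b) ≤ (1 + c : ℝ≥0) * ENNReal.ofReal ((a - b) / b) + c := by
  rcases hb.eq_or_lt with rfl | hb
  · simp
  calc ENNReal.ofReal ((m - b) / b) ≤ ENNReal.ofReal ((1 + c : ℝ≥0) * ((a - b) / b) + c) := by
        refine ENNReal.ofReal_le_ofReal ?_
        rw [div_le_iff₀ hb, add_mul, mul_assoc, div_mul_cancel₀ _ hb.ne']
        push_cast
        linarith
    _ ≤ (1 + c : ℝ≥0) * ENNReal.ofReal ((a - b) / b) + c := by
        refine ENNReal.ofReal_add_le.trans_eq ?_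
        rw [ENNReal.ofReal_mul (NNReal.coe_nonneg _), ENNReal.ofReal_coe_nnreal,
          ENNReal.ofReal_coe_nnreal]

lemma ofReal_abs_inv_sub_inv_le {a m : ℝ} (ha : 0 ≤ a) (hm : 0 < m) :
    ENNReal.ofReal |a⁻¹ - m⁻¹| ≤
      ENNReal.ofReal m⁻¹ * (ENNReal.ofReal ((m - a) / a) + ENNReal.ofReal (|a - m| / m)) := by
  rcases ha.eq_or_lt with rfl | ha
  · simp [abs_of_pos hm, hm.ne']
  rw [inv_sub_inv ha.ne' hm.ne']
  rcases le_total a m with ham | ham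
  · refine le_trans ?_ (mul_le_mul_right (le_add_right le_rfl) _)
    rw [← ENNReal.ofReal_mul (by positivity),
      abs_of_nonneg (div_nonneg (sub_nonneg.2 ham) (by positivity))]
    exact (congrArg ENNReal.ofReal (by field_simp)).le
  · refine le_trans ?_ (mul_le_mul_right (le_add_left le_rfl) _)
    rw [← ENNReal.ofReal_mul (by positivity), abs_div, abs_of_pos (mul_pos ha hm), abs_sub_comm]
    refine ENNReal.ofReal_le_ofReal ?_
    calc |a - m| / (a * m) ≤ |a - m| / (m * m) := by gcongr
      _ = m⁻¹ * (|a - m| / m) := by field_simp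

lemma one_add_pow_le {s : ℝ} (hs₀ : 0 ≤ s) (hs : s ≤ 1 / 2) (k : ℕ) :
    (1 + s) ^ k ≤ 1 + 2 * s * ((3 / 2) ^ k - 1) := by
  induction k with
  | zero => simp
  | succ k ih =>
    have hq : (1 : ℝ) ≤ (3 / 2) ^ k := one_le_pow₀ (by norm_num)
    rw [pow_succ, pow_succ]
    nlinarith [mul_le_mul_of_nonneg_right ih (by linarith : 0 ≤ 1 + s),
      mul_nonneg (mul_nonneg hs₀ (sub_nonneg.2 hq)) (sub_nonneg.2 hs)]

lemma tendsto_mul_half_pow_nhdsGT {ρ : ℝ} (hρ : 0 < ρ) :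
    Tendsto (fun j : ℕ => ρ * (1 / 2) ^ j) atTop (𝓝[>] 0) := by
  refine tendsto_nhdsWithin_iff.2 ⟨?_, Eventually.of_forall fun j => mem_Ioi.2 (by positivity)⟩
  simpa only [mul_zero] using (tendsto_pow_atTop_nhds_zero_of_lt_one (r := (1 / 2 : ℝ))
    (by norm_num) (by norm_num)).const_mul ρ

lemma tsum_two_pow_mul_pow_succ_le {η : ℝ≥0} (hη : η ≤ 1 / 4) :
    ∑' k : ℕ, (2 : ℝ≥0∞) ^ (k + 3) * (η ^ (k + 1) : ℝ≥0) ≤ (16 * η : ℝ≥0) := by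
  have hη' : 2 * η ≤ 2⁻¹ := by
    calc 2 * η ≤ 2 * (1 / 4) := by gcongr
      _ = 2⁻¹ := by norm_num
  have hterm (k : ℕ) :
      (2 : ℝ≥0∞) ^ (k + 3) * (η ^ (k + 1) : ℝ≥0) ≤ (8 * η : ℝ≥0) * 2⁻¹ ^ k := by
    have h : 2 ^ (k + 3) * η ^ (k + 1) ≤ 8 * η * 2⁻¹ ^ k :=
      calc 2 ^ (k + 3) * η ^ (k + 1) = 8 * η * (2 * η) ^ k := by rw [mul_pow]; ring
        _ ≤ 8 * η * 2⁻¹ ^ k := by gcongr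
    rw [← ENNReal.coe_le_coe] at h
    simpa only [ENNReal.coe_mul, ENNReal.coe_pow, ENNReal.coe_ofNat,
      ENNReal.coe_inv two_ne_zero] using h
  calc ∑' k : ℕ, (2 : ℝ≥0∞) ^ (k + 3) * (η ^ (k + 1) : ℝ≥0)
      ≤ ∑' k : ℕ, ((8 * η : ℝ≥0) : ℝ≥0∞) * 2⁻¹ ^ k := ENNReal.tsum_le_tsum hterm
    _ = (16 * η : ℝ≥0) := by
        rw [ENNReal.tsum_mul_left, ENNReal.tsum_geometric, ENNReal.one_sub_inv_two, inv_inv]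
        push_cast
        ring

/-! ### Mean oscillation over sets of finite measure -/

section SetAverage

variable {α : Type*} [MeasurableSpace α] {ν : Measure α} {s : Set α} {f : α → ℝ}

lemma integrableOn_abs_sub_const (hs : ν s ≠ ∞) (hf : IntegrableOn f s ν) (c : ℝ) :
    IntegrableOn (fun x => |f x - c|) s ν :=
  (hf.sub (integrableOn_const hs)).abs

lemma abs_setIntegral_sub_mul_le (hs : ν s ≠ ∞) (hf : IntegrableOn f s ν) (c : ℝ) :
    |∫ x in s, f x ∂ν - ν.real s * c| ≤ ∫ x in s, |f x - c| ∂ν := by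
  rw [← smul_eq_mul, ← setIntegral_const, ← integral_sub hf (integrableOn_const hs)]
  exact abs_integral_le_integral_abs

lemma measureReal_mul_abs_setAverage_sub_le (hs : ν s ≠ ∞) (hf : IntegrableOn f s ν) (c : ℝ) :
    ν.real s * |⨍ x in s, f x ∂ν - c| ≤ ∫ x in s, |f x - c| ∂ν := by
  rw [← abs_of_nonneg (measureReal_nonneg (μ := ν) (s := s)), ← abs_mul, mul_sub,
    ← smul_eq_mul (ν.real s) (⨍ x in s, f x ∂ν), measure_smul_setAverage f hs]
  exact abs_setIntegral_sub_mul_le hs hf c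

lemma integral_abs_sub_setAverage_le_two_mul (hs : ν s ≠ ∞) (hf : IntegrableOn f s ν) (c : ℝ) :
    ∫ x in s, |f x - ⨍ z in s, f z ∂ν| ∂ν ≤ 2 * ∫ x in s, |f x - c| ∂ν := by
  set a := ⨍ z in s, f z ∂ν
  calc ∫ x in s, |f x - a| ∂ν ≤ ∫ x in s, (|f x - c| + |a - c|) ∂ν := by
        refine integral_mono (integrableOn_abs_sub_const hs hf a)
          ((integrableOn_abs_sub_const hs hf c).add (integrableOn_const hs)) fun x => ?_
        simpa only [abs_sub_comm c a] using abs_sub_le (f x) c a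
    _ = (∫ x in s, |f x - c| ∂ν) + ν.real s * |a - c| := by
        rw [integral_add (integrableOn_abs_sub_const hs hf c) (integrableOn_const hs),
          setIntegral_const, smul_eq_mul]
    _ ≤ 2 * ∫ x in s, |f x - c| ∂ν := by
        linarith [measureReal_mul_abs_setAverage_sub_le hs hf c]

lemma integral_abs_sub_setAverage_le_two_mul_integral (hs : ν s ≠ ∞) (hf : IntegrableOn f s ν)
    (hf₀ : 0 ≤ f) :
    ∫ x in s, |f x - ⨍ z in s, f z ∂ν| ∂ν ≤ 2 * ∫ x in s, f x ∂ν := by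
  simpa only [sub_zero, abs_of_nonneg (hf₀ _)] using
    integral_abs_sub_setAverage_le_two_mul hs hf 0

lemma integral_abs_sub_setAverage_le_of_integral_abs_sub_le (hs : ν s ≠ ∞)
    (hf : IntegrableOn f s ν) {c τ : ℝ} (hτ₀ : 0 ≤ τ) (hτ : τ ≤ 1 / 2)
    (h : ∫ x in s, |f x - c| ∂ν ≤ τ * (ν.real s * c)) :
    ∫ x in s, |f x - ⨍ z in s, f z ∂ν| ∂ν ≤ 4 * τ * ∫ x in s, f x ∂ν := by
  have hosc := integral_abs_sub_setAverage_le_two_mul hs hf c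
  have hmean := (neg_le_abs _).trans (abs_setIntegral_sub_mul_le hs hf c)
  have hpos : 0 ≤ τ * (ν.real s * c) := (integral_nonneg fun _ => abs_nonneg _).trans h
  nlinarith

lemma lintegral_ofReal_abs_sub_div (hs : ν s ≠ ∞) (hf : IntegrableOn f s ν) {m : ℝ} (hm : 0 ≤ m) :
    ∫⁻ x in s, ENNReal.ofReal (|f x - m| / m) ∂ν =
      ENNReal.ofReal ((∫ x in s, |f x - m| ∂ν) / m) := by
  rw [← integral_div, ofReal_integral_eq_lintegral_ofReal
    ((integrableOn_abs_sub_const hs hf m).div_const m) (ae_of_all _ fun x => by positivity)]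

lemma measure_le_two_mul_lintegral_of_setAverage_lt_half (hs : ν s ≠ ∞) (hf : IntegrableOn f s ν)
    {m : ℝ} (hm : 0 < m) (hlt : ⨍ x in s, f x ∂ν < m / 2) :
    ν s ≤ 2 * ∫⁻ x in s, ENNReal.ofReal (|f x - m| / m) ∂ν := by
  rw [lintegral_ofReal_abs_sub_div hs hf hm.le, ← ofReal_measureReal hs, ← ENNReal.ofReal_ofNat 2,
    ← ENNReal.ofReal_mul zero_le_two]
  refine ENNReal.ofReal_le_ofReal ?_
  rw [← mul_div_assoc, le_div_iff₀ hm]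
  have hgap : m / 2 ≤ |⨍ x in s, f x ∂ν - m| := by
    rw [abs_sub_comm]
    exact le_trans (by linarith) (le_abs_self _)
  have := mul_le_mul_of_nonneg_left hgap (measureReal_nonneg (μ := ν) (s := s))
  linarith [measureReal_mul_abs_setAverage_sub_le hs hf m]

lemma lintegral_sub_div_le_add_tsum (hf : AEMeasurable f ν) (hf₀ : 0 ≤ f) (m : ℝ) :
    ∫⁻ x, ENNReal.ofReal ((m - f x) / f x) ∂ν ≤ 4 * ∫⁻ x, ENNReal.ofReal (|f x - m| / m) ∂ν +
      ∑' k : ℕ, 2 ^ (k + 3) * ν {x | f x < m / 2 ^ (k + 1)} := by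
  have hsub (k : ℕ) : NullMeasurableSet {x | f x < m / 2 ^ (k + 1)} ν :=
    nullMeasurableSet_lt hf aemeasurable_const
  have hosc : AEMeasurable (fun x => ENNReal.ofReal (|f x - m| / m)) ν :=
    ((hf.sub_const m).abs.div_const m).ennreal_ofReal
  refine (lintegral_mono fun x => ofReal_sub_div_le_add_tsum_indicator m (hf₀ x)).trans_eq ?_
  rw [lintegral_add_left' (hosc.const_mul 4), lintegral_const_mul'' _ hosc,
    lintegral_tsum fun k => aemeasurable_const.indicator₀ (hsub k)]
  simp_rw [lintegral_indicator_const₀ (hsub _)]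

end SetAverage

/-! ### Covering -/

section Besicovitch

variable (E : Type*) [MetricSpace E] [HasBesicovitchCovering E]

/-- A positive number of disjoint subfamilies that suffice in the Besicovitch covering theorem
on `E`. -/
def besicovitchConst : ℕ :=
  (HasBesicovitchCovering.no_satelliteConfig (α := E)).choose + 1

variable {E} [SecondCountableTopology E] [MeasurableSpace E] [OpensMeasurableSpace E]

lemma measure_le_besicovitchConst_mul {ν κ : Measure E} {S T : Set E} {ρ : E → ℝ} {R : ℝ}
    (hpos : ∀ x ∈ S, 0 < ρ x) (hle : ∀ x ∈ S, ρ x ≤ R) (hsub : ∀ x ∈ S, ball x (ρ x) ⊆ T)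
    (hνκ : ∀ x ∈ S, ν (ball x (ρ x)) ≤ κ (ball x (ρ x))) :
    ν S ≤ besicovitchConst E * κ T := by
  let balls : Besicovitch.BallPackage S E :=
    { c := fun x => x
      r := fun x => ρ x
      rpos := fun x => hpos x x.2
      r_bound := R
      r_le := fun x => hle x x.2 }
  obtain ⟨τ, hτ, hN⟩ := (HasBesicovitchCovering.no_satelliteConfig (α := E)).choose_spec
  obtain ⟨family, hdisj, hcover⟩ := Besicovitch.exist_disjoint_covering_families hτ hN balls
  have hdisj_ball (i) : (family i).PairwiseDisjoint fun x : S => ball (x : E) (ρ x) :=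
    (hdisj i).mono fun _ => ball_subset_closedBall
  have hcountable (i) : (family i).Countable :=
    (hdisj_ball i).countable_of_isOpen (fun _ _ => isOpen_ball)
      fun x _ => nonempty_ball.2 (hpos x x.2)
  have hfamily (i) : ν (⋃ x ∈ family i, ball (x : E) (ρ x)) ≤ κ T :=
    calc ν (⋃ x ∈ family i, ball (x : E) (ρ x))
        ≤ ∑' x : family i, ν (ball (x : E) (ρ x)) := measure_biUnion_le _ (hcountable i) _
      _ ≤ ∑' x : family i, κ (ball (x : E) (ρ x)) :=
          ENNReal.tsum_le_tsum fun x => hνκ x x.1.2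
      _ = κ (⋃ x ∈ family i, ball (x : E) (ρ x)) :=
          (measure_biUnion (hcountable i) (hdisj_ball i) fun _ _ => measurableSet_ball).symm
      _ ≤ κ T := measure_mono (iUnion₂_subset fun x _ => hsub x x.2)
  calc ν S ≤ ν (⋃ i, ⋃ x ∈ family i, ball (x : E) (ρ x)) :=
        measure_mono fun x hx => hcover ⟨⟨x, hx⟩, rfl⟩
    _ ≤ ∑ i, ν (⋃ x ∈ family i, ball (x : E) (ρ x)) := measure_iUnion_fintype_le _ _
    _ ≤ ∑ _i, κ T := Finset.sum_le_sum fun i _ => hfamily i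
    _ ≤ besicovitchConst E * κ T := by
        rw [Finset.sum_const, Finset.card_univ, Fintype.card_fin, nsmul_eq_mul, besicovitchConst]
        gcongr
        exact Nat.le_succ _

lemma measure_le_besicovitchConst_mul_of_ae {ν κ : Measure E} {S T : Set E} {R : ℝ}
    (h : ∀ᵐ x ∂ν, x ∈ S → ∃ ρ, 0 < ρ ∧ ρ ≤ R ∧ ball x ρ ⊆ T ∧ ν (S ∩ ball x ρ) ≤ κ (ball x ρ)) :
    ν S ≤ besicovitchConst E * κ T := by
  set G := {x | ∃ ρ, 0 < ρ ∧ ρ ≤ R ∧ ball x ρ ⊆ T ∧ ν (S ∩ ball x ρ) ≤ κ (ball x ρ)}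
  choose! ρ hpos hle hsub hνκ using fun x (hx : x ∈ G) => hx
  calc ν S ≤ ν (S ∩ G ∩ S) := measure_mono_ae (h.mono fun x hx hxS => ⟨⟨hxS, hx hxS⟩, hxS⟩)
    _ ≤ ν.restrict S (S ∩ G) := Measure.le_restrict_apply _ _
    _ ≤ besicovitchConst E * κ T :=
        measure_le_besicovitchConst_mul (fun x hx => hpos x hx.2) (fun x hx => hle x hx.2)
          (fun x hx => hsub x hx.2) fun x hx => by
            rw [Measure.restrict_apply measurableSet_ball, inter_comm]
            exact hνκ x hx.2

end Besicovitch

/-! ### Balls and their Haar measure -/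

section WhitneyLayer

variable {E : Type*} [PseudoMetricSpace E]

/-- The points of `B_r(y)` whose distance to the sphere of radius `r` about `y` is comparable
to `r / 2 ^ k`. -/
def whitneyLayer (y : E) (r : ℝ) (k : ℕ) : Set E :=
  {x | r < 2 ^ (k + 1) * (r - dist x y) ∧ 2 ^ k * (r - dist x y) ≤ r}

lemma sub_dist_pos_of_mem_whitneyLayer {x y : E} {r : ℝ} {k : ℕ} (hr : 0 < r)
    (hx : x ∈ whitneyLayer y r k) : 0 < r - dist x y :=
  (pos_iff_pos_of_mul_pos (hr.trans hx.1)).1 (by positivity)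

lemma ball_subset_iUnion_whitneyLayer (y : E) (r : ℝ) :
    ball y r ⊆ ⋃ k, whitneyLayer y r k := by
  intro x hx
  have hd : 0 < r - dist x y := sub_pos.2 hx
  have hr : 0 < r := pos_of_mem_ball hx
  obtain ⟨k, hlt, hle⟩ := exists_nat_pow_near_of_lt_one (x := (r - dist x y) / r) (y := 1 / 2)
    (by positivity) ((div_le_one hr).2 (sub_le_self r dist_nonneg)) (by norm_num) (by norm_num)
  rw [div_pow, one_pow, div_lt_div_iff₀ (by positivity) hr] at hlt
  rw [div_pow, one_pow, div_le_div_iff₀ hr (by positivity)] at hle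
  exact mem_iUnion.2 ⟨k, by linarith, by linarith⟩

lemma ball_subset_ball_diff_of_mem_whitneyLayer {x y : E} {r : ℝ} {k : ℕ}
    (hx : x ∈ whitneyLayer y r k) :
    ball x ((r - dist x y) / 2) ⊆ ball y r \ ball y ((1 - 2 / 2 ^ k) * r) := by
  intro z hz
  have hz : dist z x < (r - dist x y) / 2 := hz
  have hd : 0 < r - dist x y := by linarith [dist_nonneg.trans_lt hz]
  have hle : r - dist x y ≤ r / 2 ^ k := by
    rw [le_div_iff₀ (by positivity), mul_comm]
    exact hx.2
  have hcomm : 2 / 2 ^ k * r = 2 * (r / 2 ^ k) := by ring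
  refine ⟨mem_ball.2 (by linarith [dist_triangle z x y]), fun hz' => ?_⟩
  have hz' : dist z y < (1 - 2 / 2 ^ k) * r := hz'
  linarith [dist_triangle x z y, dist_comm x z]

end WhitneyLayer

section Ball

variable {E : Type*} [NormedAddCommGroup E] [NormedSpace ℝ E]

lemma exists_half_radius_ball_between {x y : E} {r r' : ℝ} (hr' : 0 < r') (hrr' : 2 * r' ≤ r)
    (hxy : dist x y ≤ r - r') :
    ∃ z, dist z y ≤ r / 2 ∧ dist x z ≤ r / 2 - r' := by
  set t := r / 2 / (r - r')
  have hgap : 0 < r - r' := by linarith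
  have ht₀ : 0 ≤ t := div_nonneg (by linarith) hgap.le
  have ht₁ : t ≤ 1 := (div_le_one hgap).2 (by linarith)
  have ht : t * (r - r') = r / 2 := div_mul_cancel₀ _ hgap.ne'
  refine ⟨AffineMap.lineMap y x t, ?_, ?_⟩
  · rw [dist_lineMap_left, Real.norm_of_nonneg ht₀, ← ht, dist_comm]
    gcongr
  · rw [dist_comm, dist_lineMap_right, Real.norm_of_nonneg (sub_nonneg.2 ht₁), dist_comm]
    nlinarith [mul_le_mul_of_nonneg_left hxy (sub_nonneg.2 ht₁)]

variable [FiniteDimensional ℝ E] [MeasurableSpace E] [BorelSpace E] (ν : Measure E)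
  [ν.IsAddHaarMeasure]

lemma addHaar_ball_two_mul (x : E) (r : ℝ) :
    ν (ball x (2 * r)) = 2 ^ finrank ℝ E * ν (ball x r) := by
  rw [Measure.addHaar_ball_mul_of_pos ν x two_pos r, Measure.addHaar_ball_center ν x r,
    ENNReal.ofReal_pow zero_le_two, ENNReal.ofReal_ofNat]

lemma closedBall_ae_eq_ball_of_ne_zero (x : E) {r : ℝ} (hr : r ≠ 0) :
    (closedBall x r : Set E) =ᵐ[ν] ball x r := by
  rw [← ball_union_sphere]
  exact union_ae_eq_left_of_ae_eq_empty (ae_eq_empty.2 (Measure.addHaar_sphere_of_ne_zero ν x hr))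

lemma addHaar_ball_diff_ball_le (y : E) {r : ℝ} (hr : 0 < r) (τ : ℝ≥0) :
    ν (ball y r \ ball y ((1 - τ) * r)) ≤ ((finrank ℝ E + 1) * τ : ℝ≥0) * ν (ball y r) := by
  rcases le_or_gt 1 τ with hτ | hτ
  · refine (measure_mono sdiff_subset).trans (le_mul_of_one_le_left zero_le ?_)
    rw [ENNReal.one_le_coe_iff]
    exact hτ.trans (le_mul_of_one_le_left zero_le (le_add_left le_rfl))
  · have hτ' : 0 < 1 - (τ : ℝ) := sub_pos.2 (by exact_mod_cast hτ)
    have hsub : ball y ((1 - τ) * r) ⊆ ball y r := ball_subset_ball (by nlinarith [τ.coe_nonneg])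
    have hbernoulli : 1 - (1 - (τ : ℝ)) ^ finrank ℝ E ≤ (finrank ℝ E + 1) * τ := by
      have := one_add_mul_le_pow (a := -(τ : ℝ)) (by linarith) (finrank ℝ E)
      rw [← sub_eq_add_neg] at this
      linarith [τ.coe_nonneg]
    calc ν (ball y r \ ball y ((1 - τ) * r))
        = ν (ball y r) - ENNReal.ofReal ((1 - τ) ^ finrank ℝ E) * ν (ball y r) := by
          rw [measure_sdiff hsub measurableSet_ball.nullMeasurableSet measure_ball_lt_top.ne,
            Measure.addHaar_ball_mul_of_pos ν y hτ' r, Measure.addHaar_ball_center ν y r]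
      _ = ENNReal.ofReal (1 - (1 - τ) ^ finrank ℝ E) * ν (ball y r) := by
          rw [ENNReal.ofReal_sub _ (pow_nonneg hτ'.le _), ENNReal.ofReal_one,
            ENNReal.sub_mul fun _ _ => measure_ball_lt_top.ne, one_mul]
      _ ≤ ((finrank ℝ E + 1) * τ : ℝ≥0) * ν (ball y r) := by
          rw [← ENNReal.ofReal_coe_nnreal]
          gcongr
          exact_mod_cast hbernoulli

end Ball

/-! ### Weights of small relative oscillation -/

/-- The mean of `w` over the open ball `B_r(y)`, for an arbitrary measure `ν`. -/
def ballMean {E : Type*} [PseudoMetricSpace E] [MeasurableSpace E] (ν : Measure E) (w : E → ℝ)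
    (y : E) (r : ℝ) : ℝ :=
  ⨍ z in ball y r, w z ∂ν

/-- `w` is a weight with `[[w]]_{BMO(Ω, w)} ≤ δ`. The quotient in the weighted oscillation is
multiplied out, so that balls of zero mass impose a genuine condition. -/
structure HasRelOscLE {E : Type*} [PseudoMetricSpace E] [MeasurableSpace E] (ν : Measure E)
    (w : E → ℝ) (Ω : Set E) (δ : ℝ≥0) : Prop where
  nonneg : 0 ≤ w
  locallyIntegrable : LocallyIntegrable w ν
  integral_abs_sub_le : ∀ y r, 0 < r → ball y r ⊆ Ω →
    ∫ x in ball y r, |w x - ballMean ν w y r| ∂ν ≤ δ * ∫ x in ball y r, w x ∂ν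

section Constants

variable (E : Type*) [NormedAddCommGroup E] [NormedSpace ℝ E] [FiniteDimensional ℝ E]

/-- The factor by which the measure of `{w < λ}` is seen to drop when `λ` is halved, for a weight
of relative oscillation `δ`. -/
def decayRatio (δ : ℝ≥0) : ℝ≥0 :=
  besicovitchConst E * (2 ^ (finrank ℝ E + 1) * δ)

/-- The factor relating the relative oscillation of a weight, when small, to the deviation of its
reciprocal from the reciprocal of its mean. -/
def reciprocalOscConst : ℝ≥0 :=
  280 * besicovitchConst E * (finrank ℝ E + 1) * decayRatio E 1 + 1

variable {E} {δ : ℝ≥0}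

lemma two_pow_mul_le_decayRatio (δ : ℝ≥0) : 2 ^ (finrank ℝ E + 1) * δ ≤ decayRatio E δ := by
  refine le_mul_of_one_le_left zero_le ?_
  rw [Nat.one_le_cast]
  exact Nat.le_add_left _ _

lemma reciprocalOscConst_mul (δ : ℝ≥0) :
    reciprocalOscConst E * δ =
      280 * besicovitchConst E * (finrank ℝ E + 1) * decayRatio E δ + δ := by
  rw [reciprocalOscConst, decayRatio, decayRatio]
  ring

lemma decayRatio_le_of_reciprocalOscConst_mul_le (h : reciprocalOscConst E * δ ≤ 1 / 2) :
    decayRatio E δ ≤ 1 / 4 := by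
  have hN : (1 : ℝ≥0) ≤ besicovitchConst E := Nat.one_le_cast.2 (Nat.le_add_left _ _)
  have hd : (1 : ℝ≥0) ≤ finrank ℝ E + 1 := le_add_left le_rfl
  have h280 : 2 * decayRatio E δ ≤ 1 / 2 :=
    calc 2 * decayRatio E δ ≤ 280 * 1 * 1 * decayRatio E δ + 0 := by
          rw [mul_one, mul_one, add_zero]
          gcongr
          norm_num
      _ ≤ 280 * besicovitchConst E * (finrank ℝ E + 1) * decayRatio E δ + δ := by gcongr; simp
      _ ≤ 1 / 2 := reciprocalOscConst_mul (E := E) δ ▸ h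
  rw [← NNReal.coe_le_coe] at h280 ⊢
  push_cast at h280 ⊢
  linarith

end Constants

section BallMean

variable {E : Type*} [PseudoMetricSpace E] [MeasurableSpace E] {ν : Measure E} {w : E → ℝ}

lemma ballMean_nonneg (hw : 0 ≤ w) (y : E) (r : ℝ) : 0 ≤ ballMean ν w y r := by
  rw [ballMean, setAverage_eq]
  exact smul_nonneg (inv_nonneg.2 measureReal_nonneg) (integral_nonneg hw)

lemma integrableOn_ball [ProperSpace E] (hw : LocallyIntegrable w ν) (y : E) (r : ℝ) :
    IntegrableOn w (ball y r) ν :=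
  (hw.integrableOn_isCompact (isCompact_closedBall y r)).mono_set ball_subset_closedBall

lemma ae_eq_zero_of_ballMean_eq_zero [ProperSpace E] [IsFiniteMeasureOnCompacts ν] (hw₀ : 0 ≤ w)
    (hw : LocallyIntegrable w ν) {y : E} {r : ℝ} (hm : ballMean ν w y r = 0) :
    w =ᵐ[ν.restrict (ball y r)] 0 := by
  rw [← setIntegral_eq_zero_iff_of_nonneg_ae (ae_of_all _ hw₀) (integrableOn_ball hw y r),
    ← measure_smul_setAverage w measure_ball_lt_top.ne]
  exact smul_eq_zero_of_right _ hm

namespace HasRelOscLE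

variable [ProperSpace E] [IsFiniteMeasureOnCompacts ν] {Ω : Set E} {δ : ℝ≥0}

lemma integral_abs_sub_le_mul_ballMean (hw : HasRelOscLE ν w Ω δ) {y : E} {r : ℝ} (hr : 0 < r)
    (hΩ : ball y r ⊆ Ω) :
    ∫ x in ball y r, |w x - ballMean ν w y r| ∂ν ≤
      δ * (ν.real (ball y r) * ballMean ν w y r) := by
  rw [ballMean, ← smul_eq_mul (ν.real _), measure_smul_setAverage w measure_ball_lt_top.ne]
  exact hw.integral_abs_sub_le y r hr hΩ

lemma lintegral_abs_sub_div_le (hw : HasRelOscLE ν w Ω δ) {y : E} {r : ℝ} (hr : 0 < r)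
    (hΩ : ball y r ⊆ Ω) :
    ∫⁻ x in ball y r, ENNReal.ofReal (|w x - ballMean ν w y r| / ballMean ν w y r) ∂ν ≤
      δ * ν (ball y r) := by
  have hm := ballMean_nonneg (ν := ν) hw.nonneg y r
  rw [lintegral_ofReal_abs_sub_div measure_ball_lt_top.ne
      (integrableOn_ball hw.locallyIntegrable y r) hm, ← ofReal_measureReal measure_ball_lt_top.ne,
    ← ENNReal.ofReal_coe_nnreal, ← ENNReal.ofReal_mul δ.coe_nonneg]
  refine ENNReal.ofReal_le_ofReal (div_le_of_le_mul₀ hm (by positivity) ?_)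
  rw [mul_assoc]
  exact hw.integral_abs_sub_le_mul_ballMean hr hΩ

end HasRelOscLE

end BallMean

section Weight

variable {E : Type*} [NormedAddCommGroup E] [NormedSpace ℝ E] [FiniteDimensional ℝ E]
  [MeasurableSpace E] [BorelSpace E] {ν : Measure E} [ν.IsAddHaarMeasure] {w : E → ℝ}
  {Ω : Set E} {δ : ℝ≥0}

lemma ae_tendsto_ballMean (hw : LocallyIntegrable w ν) {ρ : ℕ → ℝ}
    (hρ : Tendsto ρ atTop (𝓝[>] 0)) :
    ∀ᵐ x ∂ν, Tendsto (fun j => ballMean ν w x (ρ j)) atTop (𝓝 (w x)) := by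
  filter_upwards [IsUnifLocDoublingMeasure.ae_tendsto_average ν hw 1] with x hx
  have hρpos : ∀ᶠ j in atTop, 0 < ρ j := hρ self_mem_nhdsWithin
  refine (hx (fun _ => x) ρ hρ ?_).congr' ?_
  · filter_upwards [hρpos] with j hj
    exact mem_closedBall_self (by linarith)
  · filter_upwards [hρpos] with j hj
    exact setAverage_congr (closedBall_ae_eq_ball_of_ne_zero ν x hj.ne')

namespace HasRelOscLE

lemma lintegral_abs_sub_div_le_of_two_mul (hw : HasRelOscLE ν w Ω δ) {y : E} {r : ℝ} (hr : 0 < r)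
    (hΩ : ball y (2 * r) ⊆ Ω) :
    2 * ∫⁻ x in ball y (2 * r),
      ENNReal.ofReal (|w x - ballMean ν w y (2 * r)| / ballMean ν w y (2 * r)) ∂ν ≤
      (2 ^ (finrank ℝ E + 1) * δ : ℝ≥0) * ν (ball y r) := by
  refine (mul_le_mul_right (hw.lintegral_abs_sub_div_le (by positivity) hΩ) 2).trans_eq ?_
  rw [addHaar_ball_two_mul]
  push_cast
  ring

lemma ballMean_le_mul_of_ball_subset (hw : HasRelOscLE ν w Ω δ)
    (hδ : 2 ^ (finrank ℝ E + 1) * δ ≤ 1) {x y : E} {r r' : ℝ} (hr' : 0 < r') (hr : 0 < r)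
    (hrr' : r ≤ 2 * r') (hsub : ball x r' ⊆ ball y r) (hΩ : ball y r ⊆ Ω) :
    ballMean ν w y r ≤ (1 + 2 ^ (finrank ℝ E + 1) * δ) * ballMean ν w x r' := by
  set m := ballMean ν w y r
  set a := ballMean ν w x r'
  set t : ℝ := 2 ^ finrank ℝ E * δ with ht
  have hm : 0 ≤ m := ballMean_nonneg hw.nonneg y r
  have hdouble : ν.real (ball y r) ≤ 2 ^ finrank ℝ E * ν.real (ball x r') := by
    have h : ν (ball y r) ≤ 2 ^ finrank ℝ E * ν (ball x r') := by
      rw [Measure.addHaar_ball_center ν x, ← Measure.addHaar_ball_center ν y,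
        ← addHaar_ball_two_mul]
      exact measure_mono (ball_subset_ball hrr')
    simpa [Measure.real] using ENNReal.toReal_mono
      (ENNReal.mul_ne_top (by simp) measure_ball_lt_top.ne) h
  have hdeficit : ν.real (ball x r') * |a - m| ≤ ν.real (ball x r') * (t * m) := by
    calc ν.real (ball x r') * |a - m| ≤ ∫ z in ball x r', |w z - m| ∂ν :=
          measureReal_mul_abs_setAverage_sub_le measure_ball_lt_top.ne
            (integrableOn_ball hw.locallyIntegrable x r') m
      _ ≤ ∫ z in ball y r, |w z - m| ∂ν :=
          setIntegral_mono_set (integrableOn_abs_sub_const measure_ball_lt_top.ne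
            (integrableOn_ball hw.locallyIntegrable y r) m)
            (ae_of_all _ fun _ => abs_nonneg _) hsub.eventuallyLE
      _ ≤ δ * (ν.real (ball y r) * m) := hw.integral_abs_sub_le_mul_ballMean hr hΩ
      _ ≤ δ * (2 ^ finrank ℝ E * ν.real (ball x r') * m) := by gcongr
      _ = ν.real (ball x r') * (t * m) := by rw [ht]; ring
  have hball : 0 < ν.real (ball x r') :=
    ENNReal.toReal_pos (measure_ball_pos ν x hr').ne' measure_ball_lt_top.ne
  have hdrop : m - a ≤ t * m :=
    (le_abs_self _).trans ((abs_sub_comm m a).trans_le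
      (le_of_mul_le_mul_left hdeficit hball))
  have ht₀ : 0 ≤ t := by positivity
  have hs : (2 : ℝ) ^ (finrank ℝ E + 1) * δ = 2 * t := by rw [ht, pow_succ]; ring
  have ht₁ : 2 * t ≤ 1 := by rw [← hs]; exact_mod_cast hδ
  rw [hs]
  nlinarith [mul_nonneg ht₀ hm, mul_nonneg (mul_nonneg ht₀ hm) (sub_nonneg.2 ht₁)]

lemma ballMean_le_pow_mul (hw : HasRelOscLE ν w Ω δ) (hδ : 2 ^ (finrank ℝ E + 1) * δ ≤ 1)
    (k : ℕ) {x y : E} {r r' : ℝ} (hr' : 0 < r') (hrr' : r ≤ 2 ^ k * r')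
    (hxy : dist x y ≤ r - r') (hΩ : ball y r ⊆ Ω) :
    ballMean ν w y r ≤ (1 + 2 ^ (finrank ℝ E + 1) * δ) ^ k * ballMean ν w x r' := by
  have hr : 0 < r := by linarith [dist_nonneg (x := x) (y := y)]
  induction k generalizing y r with
  | zero =>
    obtain rfl : r = r' := by linarith [dist_nonneg (x := x) (y := y)]
    obtain rfl : x = y := dist_le_zero.1 (by linarith)
    simp
  | succ k ih =>
    set q : ℝ := 1 + 2 ^ (finrank ℝ E + 1) * δ
    have hq : 1 ≤ q := le_add_of_nonneg_right (by positivity)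
    rcases le_total r (2 * r') with hnear | hfar
    · calc ballMean ν w y r ≤ q * ballMean ν w x r' :=
            hw.ballMean_le_mul_of_ball_subset hδ hr' hr hnear (ball_subset_ball' (by linarith)) hΩ
        _ ≤ q ^ (k + 1) * ballMean ν w x r' :=
            mul_le_mul_of_nonneg_right (le_self_pow₀ hq k.succ_ne_zero)
              (ballMean_nonneg hw.nonneg x r')
    · obtain ⟨z, hzy, hxz⟩ := exists_half_radius_ball_between hr' hfar hxy
      have hsub : ball z (r / 2) ⊆ ball y r := ball_subset_ball' (by linarith)
      calc ballMean ν w y r ≤ q * ballMean ν w z (r / 2) :=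
            hw.ballMean_le_mul_of_ball_subset hδ (half_pos hr) hr (by linarith) hsub hΩ
        _ ≤ q * (q ^ k * ballMean ν w x r') := by
            refine mul_le_mul_of_nonneg_left (ih ?_ hxz (hsub.trans hΩ) (half_pos hr)) (by linarith)
            rw [pow_succ] at hrr'
            linarith
        _ = q ^ (k + 1) * ballMean ν w x r' := by ring

lemma exists_stopping_radius (hw : HasRelOscLE ν w Ω δ) (hδ : 2 ^ (finrank ℝ E + 1) * δ ≤ 1)
    {x x₀ : E} {ρ : ℝ} (hρ : 0 < ρ) (hΩ : ball x₀ (2 * ρ) ⊆ Ω) (hx : x ∈ ball x₀ ρ)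
    (hlim : Tendsto (fun j : ℕ => ballMean ν w x (ρ * (1 / 2) ^ j)) atTop (𝓝 (w x)))
    (hwx : w x < ballMean ν w x₀ (2 * ρ) / 2) :
    ∃ ρ', 0 < ρ' ∧ 2 * ρ' ≤ ρ ∧ ballMean ν w x ρ' < ballMean ν w x₀ (2 * ρ) / 2 ∧
      ballMean ν w x₀ (2 * ρ) / 2 ≤ ballMean ν w x (2 * ρ') := by
  set m := ballMean ν w x₀ (2 * ρ)
  have hstart : m / 2 ≤ ballMean ν w x ρ := by
    have hδ' : (2 : ℝ) ^ (finrank ℝ E + 1) * δ ≤ 1 := by exact_mod_cast hδ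
    have hmean := hw.ballMean_le_mul_of_ball_subset hδ hρ (by linarith) le_rfl
      (ball_subset_ball' (by linarith [mem_ball.1 hx])) hΩ (x := x)
    nlinarith [hδ', ballMean_nonneg (ν := ν) hw.nonneg x ρ]
  obtain ⟨j, hj, hj'⟩ : ∃ j : ℕ, m / 2 ≤ ballMean ν w x (ρ * (1 / 2) ^ j) ∧
      ballMean ν w x (ρ * (1 / 2) ^ (j + 1)) < m / 2 := by
    by_contra! hstep
    have hall (j : ℕ) : m / 2 ≤ ballMean ν w x (ρ * (1 / 2) ^ j) := by
      induction j with
      | zero => simpa using hstart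
      | succ j ih => exact hstep j ih
    exact hwx.not_ge (ge_of_tendsto' hlim hall)
  have hdouble : 2 * (ρ * (1 / 2) ^ (j + 1)) = ρ * (1 / 2) ^ j := by rw [pow_succ]; ring
  refine ⟨ρ * (1 / 2) ^ (j + 1), by positivity, ?_, hj', hdouble ▸ hj⟩
  rw [hdouble]
  exact mul_le_of_le_one_right hρ.le (pow_le_one₀ (by norm_num) (by norm_num))

-- Stop at the first dyadic radius where the mean drops below `m / 2`. On such a ball the mean
-- deviation from `m` is at least `m / 2`, while on its double the mean is still at least `m / 2`,
-- so `hc` applies there.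
lemma measure_sublevel_inter_ball_le_of_halve (hw : HasRelOscLE ν w Ω δ)
    (hδ : 2 ^ (finrank ℝ E + 1) * δ ≤ 1) {t : ℝ} (ht : 1 ≤ t) {c : ℝ≥0}
    (hc : ∀ x ρ, 0 < ρ → ball x (2 * ρ) ⊆ Ω →
      ν ({z | w z < ballMean ν w x (2 * ρ) / t} ∩ ball x ρ) ≤ c * ν (ball x ρ))
    {x₀ : E} {ρ : ℝ} (hρ : 0 < ρ) (hΩ : ball x₀ (2 * ρ) ⊆ Ω)
    (hm : 0 < ballMean ν w x₀ (2 * ρ)) :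
    ν ({z | w z < ballMean ν w x₀ (2 * ρ) / 2 / t} ∩ ball x₀ ρ) ≤
      (c * decayRatio E δ : ℝ≥0) * ν (ball x₀ ρ) := by
  set m := ballMean ν w x₀ (2 * ρ)
  set A := {z | w z < m / 2 / t} ∩ ball x₀ ρ
  set g : E → ℝ≥0∞ := fun z => ENNReal.ofReal (|w z - m| / m)
  have ht₀ : 0 < t := one_pos.trans_le ht
  set κ : Measure E := (c : ℝ≥0∞) • (2 : ℝ≥0∞) • ν.withDensity g
  have hκ (y : E) (r : ℝ) : κ (ball y r) = c * (2 * ∫⁻ z in ball y r, g z ∂ν) := by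
    rw [Measure.smul_apply, Measure.smul_apply, withDensity_apply _ measurableSet_ball,
      smul_eq_mul, smul_eq_mul]
  have hcover : ν A ≤ besicovitchConst E * κ (ball x₀ (2 * ρ)) := by
    refine measure_le_besicovitchConst_mul_of_ae (R := ρ) ?_
    filter_upwards [ae_tendsto_ballMean hw.locallyIntegrable (tendsto_mul_half_pow_nhdsGT hρ)]
      with x hlim hxA
    obtain ⟨ρ', hρ', hρ'ρ, hlt, hge⟩ := hw.exists_stopping_radius hδ hρ hΩ hxA.2 hlim
      (hxA.1.trans_le (div_le_self (by positivity) ht))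
    have hx := mem_ball.1 hxA.2
    refine ⟨ρ', hρ', by linarith, ball_subset_ball' (by linarith), ?_⟩
    calc ν (A ∩ ball x ρ') ≤ ν ({z | w z < ballMean ν w x (2 * ρ') / t} ∩ ball x ρ') := by
          refine measure_mono (inter_subset_inter_left _ fun z hz => ?_)
          exact lt_of_lt_of_le (b := m / 2 / t) hz.1 (div_le_div_of_nonneg_right hge ht₀.le)
      _ ≤ c * ν (ball x ρ') := hc x ρ' hρ' ((ball_subset_ball' (by linarith)).trans hΩ)
      _ ≤ κ (ball x ρ') := by
          rw [hκ]
          gcongr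
          exact measure_le_two_mul_lintegral_of_setAverage_lt_half measure_ball_lt_top.ne
            (integrableOn_ball hw.locallyIntegrable x ρ') hm hlt
  calc ν A ≤ besicovitchConst E * (c * (2 * ∫⁻ z in ball x₀ (2 * ρ), g z ∂ν)) := hκ _ _ ▸ hcover
    _ ≤ besicovitchConst E * (c * ((2 ^ (finrank ℝ E + 1) * δ : ℝ≥0) * ν (ball x₀ ρ))) := by
        gcongr _ * (_ * ?_)
        exact hw.lintegral_abs_sub_div_le_of_two_mul hρ hΩ
    _ = (c * decayRatio E δ : ℝ≥0) * ν (ball x₀ ρ) := by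
        rw [decayRatio]
        push_cast
        ring

lemma measure_sublevel_inter_ball_le (hw : HasRelOscLE ν w Ω δ)
    (hδ : 2 ^ (finrank ℝ E + 1) * δ ≤ 1) (k : ℕ) {x : E} {ρ : ℝ} (hρ : 0 < ρ)
    (hΩ : ball x (2 * ρ) ⊆ Ω) :
    ν ({z | w z < ballMean ν w x (2 * ρ) / 2 ^ k} ∩ ball x ρ) ≤
      (decayRatio E δ ^ k : ℝ≥0) * ν (ball x ρ) := by
  induction k generalizing x ρ with
  | zero => simpa using measure_mono inter_subset_right
  | succ k ih =>
    rcases (ballMean_nonneg (ν := ν) hw.nonneg x (2 * ρ)).eq_or_lt with hm | hm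
    · have hempty : {z | w z < ballMean ν w x (2 * ρ) / 2 ^ (k + 1)} = ∅ :=
        eq_empty_of_forall_notMem fun z hz => by
          rw [← hm, zero_div] at hz
          exact hz.not_ge (hw.nonneg z)
      simp [hempty]
    · have hstep := hw.measure_sublevel_inter_ball_le_of_halve hδ (t := 2 ^ k)
        (one_le_pow₀ one_le_two) (fun _ _ => ih) hρ hΩ hm
      rwa [div_div, ← pow_succ', ← pow_succ] at hstep

lemma lintegral_sub_div_le_of_half_radius (hw : HasRelOscLE ν w Ω δ)
    (hη : decayRatio E δ ≤ 1 / 4) {x : E} {ρ : ℝ} (hρ : 0 < ρ) (hΩ : ball x (2 * ρ) ⊆ Ω) :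
    ∫⁻ z in ball x ρ, ENNReal.ofReal ((ballMean ν w x (2 * ρ) - w z) / w z) ∂ν ≤
      (18 * decayRatio E δ : ℝ≥0) * ν (ball x ρ) := by
  set m := ballMean ν w x (2 * ρ)
  have hδ : 2 ^ (finrank ℝ E + 1) * δ ≤ 1 :=
    ((two_pow_mul_le_decayRatio δ).trans hη).trans (by rw [← NNReal.coe_le_coe]; norm_num)
  have hosc : 4 * ∫⁻ z in ball x ρ, ENNReal.ofReal (|w z - m| / m) ∂ν ≤
      (2 * decayRatio E δ : ℝ≥0) * ν (ball x ρ) :=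
    calc 4 * ∫⁻ z in ball x ρ, ENNReal.ofReal (|w z - m| / m) ∂ν
        ≤ 4 * ∫⁻ z in ball x (2 * ρ), ENNReal.ofReal (|w z - m| / m) ∂ν := by
          gcongr
          linarith
      _ = 2 * (2 * ∫⁻ z in ball x (2 * ρ), ENNReal.ofReal (|w z - m| / m) ∂ν) := by ring
      _ ≤ 2 * ((2 ^ (finrank ℝ E + 1) * δ : ℝ≥0) * ν (ball x ρ)) := by
          gcongr 2 * ?_
          exact hw.lintegral_abs_sub_div_le_of_two_mul hρ hΩ
      _ ≤ 2 * (decayRatio E δ * ν (ball x ρ)) := by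
          gcongr
          exact two_pow_mul_le_decayRatio δ
      _ = (2 * decayRatio E δ : ℝ≥0) * ν (ball x ρ) := by push_cast; ring
  have hsublevel : ∑' k : ℕ, 2 ^ (k + 3) * ν.restrict (ball x ρ) {z | w z < m / 2 ^ (k + 1)} ≤
      (16 * decayRatio E δ : ℝ≥0) * ν (ball x ρ) := by
    refine le_trans (ENNReal.tsum_le_tsum fun k => ?_)
      (ENNReal.tsum_mul_right.trans_le (mul_le_mul_left (tsum_two_pow_mul_pow_succ_le hη) _))
    rw [Measure.restrict_apply' measurableSet_ball, mul_assoc]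
    gcongr
    exact hw.measure_sublevel_inter_ball_le hδ (k + 1) hρ hΩ
  calc ∫⁻ z in ball x ρ, ENNReal.ofReal ((m - w z) / w z) ∂ν
      ≤ (2 * decayRatio E δ : ℝ≥0) * ν (ball x ρ) + (16 * decayRatio E δ : ℝ≥0) * ν (ball x ρ) :=
        (lintegral_sub_div_le_add_tsum
          (integrableOn_ball hw.locallyIntegrable x ρ).aemeasurable hw.nonneg m).trans
          (add_le_add hosc hsublevel)
    _ = (18 * decayRatio E δ : ℝ≥0) * ν (ball x ρ) := by push_cast; ring

lemma ballMean_le_mul_of_mem_whitneyLayer (hw : HasRelOscLE ν w Ω δ)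
    (hη : decayRatio E δ ≤ 1 / 4) {x y : E} {r : ℝ} {k : ℕ} (hr : 0 < r)
    (hx : x ∈ whitneyLayer y r k) (hΩ : ball y r ⊆ Ω) :
    ballMean ν w y r ≤ (1 + 3 * decayRatio E δ * (3 / 2) ^ k) * ballMean ν w x (r - dist x y) := by
  set η := decayRatio E δ
  have hη' : (η : ℝ) ≤ 1 / 4 := by exact_mod_cast hη
  have hδη : (2 : ℝ) ^ (finrank ℝ E + 1) * δ ≤ η := by exact_mod_cast two_pow_mul_le_decayRatio δ
  have hδ : (2 : ℝ) ^ (finrank ℝ E + 1) * δ ≤ 1 := by linarith [hη']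
  have hmean : 0 ≤ ballMean ν w x (r - dist x y) := ballMean_nonneg hw.nonneg x _
  calc ballMean ν w y r
      ≤ (1 + 2 ^ (finrank ℝ E + 1) * δ) ^ (k + 1) * ballMean ν w x (r - dist x y) :=
        hw.ballMean_le_pow_mul (by exact_mod_cast hδ) (k + 1)
          (sub_dist_pos_of_mem_whitneyLayer hr hx) hx.1.le (by linarith) hΩ
    _ ≤ (1 + η) ^ (k + 1) * ballMean ν w x (r - dist x y) := by gcongr
    _ ≤ (1 + 3 * η * (3 / 2) ^ k) * ballMean ν w x (r - dist x y) := by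
        gcongr
        refine (one_add_pow_le η.coe_nonneg (by linarith [hη']) (k + 1)).trans ?_
        rw [pow_succ]
        linarith [η.coe_nonneg]

lemma lintegral_sub_div_le_of_mem_whitneyLayer (hw : HasRelOscLE ν w Ω δ)
    (hη : decayRatio E δ ≤ 1 / 4) {x y : E} {r : ℝ} {k : ℕ} (hr : 0 < r)
    (hx : x ∈ whitneyLayer y r k) (hΩ : ball y r ⊆ Ω) :
    ∫⁻ z in ball x ((r - dist x y) / 2), ENNReal.ofReal ((ballMean ν w y r - w z) / w z) ∂ν ≤
      (35 * decayRatio E δ * (3 / 2) ^ k : ℝ≥0) * ν (ball x ((r - dist x y) / 2)) := by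
  set η := decayRatio E δ
  set ρ := (r - dist x y) / 2
  set a := ballMean ν w x (2 * ρ)
  set c : ℝ≥0 := 3 * η * (3 / 2) ^ k
  have hρ : 0 < ρ := half_pos (sub_dist_pos_of_mem_whitneyLayer hr hx)
  have h2ρ : 2 * ρ = r - dist x y := mul_div_cancel₀ _ two_ne_zero
  have hη' : (η : ℝ) ≤ 1 / 4 := by exact_mod_cast hη
  have hmean : ballMean ν w y r ≤ (1 + c) * a := by
    simpa [a, c, h2ρ] using hw.ballMean_le_mul_of_mem_whitneyLayer hη hr hx hΩ
  have hconst : (1 + c) * (18 * η) + c ≤ 35 * η * (3 / 2) ^ k := by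
    have hq : (1 : ℝ) ≤ (3 / 2) ^ k := one_le_pow₀ (by norm_num)
    rw [← NNReal.coe_le_coe]
    push_cast [c]
    have := mul_le_mul_of_nonneg_left hq η.coe_nonneg
    nlinarith [mul_le_mul_of_nonneg_left hη' (mul_nonneg η.coe_nonneg (zero_le_one.trans hq))]
  calc ∫⁻ z in ball x ρ, ENNReal.ofReal ((ballMean ν w y r - w z) / w z) ∂ν
      ≤ ∫⁻ z in ball x ρ, ((1 + c : ℝ≥0) * ENNReal.ofReal ((a - w z) / w z) + c) ∂ν :=
        lintegral_mono fun z => ofReal_sub_div_le_of_le_mul (hw.nonneg z) hmean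
    _ = (1 + c : ℝ≥0) * ∫⁻ z in ball x ρ, ENNReal.ofReal ((a - w z) / w z) ∂ν +
          c * ν (ball x ρ) := by
        rw [lintegral_add_right _ measurable_const, lintegral_const_mul' _ _ ENNReal.coe_ne_top,
          setLIntegral_const]
    _ ≤ (1 + c : ℝ≥0) * ((18 * η : ℝ≥0) * ν (ball x ρ)) + c * ν (ball x ρ) := by
        gcongr
        exact hw.lintegral_sub_div_le_of_half_radius hη hρ
          ((ball_subset_ball' (by linarith)).trans hΩ)
    _ = ((1 + c) * (18 * η) + c : ℝ≥0) * ν (ball x ρ) := by push_cast; ring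
    _ ≤ (35 * η * (3 / 2) ^ k : ℝ≥0) * ν (ball x ρ) := by gcongr

lemma withDensity_sub_div_whitneyLayer_le (hw : HasRelOscLE ν w Ω δ)
    (hη : decayRatio E δ ≤ 1 / 4) {y : E} {r : ℝ} (hr : 0 < r) (hΩ : ball y r ⊆ Ω) (k : ℕ) :
    ν.withDensity (fun z => ENNReal.ofReal ((ballMean ν w y r - w z) / w z))
        (whitneyLayer y r k) ≤
      (70 * besicovitchConst E * (finrank ℝ E + 1) * decayRatio E δ * (3 / 4) ^ k : ℝ≥0) *
        ν (ball y r) := by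
  set c : ℝ≥0 := 35 * decayRatio E δ * (3 / 2) ^ k
  have hcover := measure_le_besicovitchConst_mul_of_ae (R := r)
    (S := whitneyLayer y r k) (T := ball y r \ ball y ((1 - 2 / 2 ^ k) * r))
    (ν := ν.withDensity fun z => ENNReal.ofReal ((ballMean ν w y r - w z) / w z))
    (κ := (c : ℝ≥0∞) • ν) (ae_of_all _ fun x hx => ?_)
  · refine hcover.trans ?_
    calc besicovitchConst E * ((c : ℝ≥0∞) • ν) (ball y r \ ball y ((1 - 2 / 2 ^ k) * r))
        ≤ besicovitchConst E *
          (c * (((finrank ℝ E + 1) * (2 / 2 ^ k) : ℝ≥0) * ν (ball y r))) := by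
          rw [Measure.smul_apply, smul_eq_mul]
          gcongr _ * (_ * ?_)
          simpa using addHaar_ball_diff_ball_le ν y hr (2 / 2 ^ k)
      _ = _ := by
          rw [← mul_assoc, ← mul_assoc, ← ENNReal.coe_natCast, ← ENNReal.coe_mul,
            ← ENNReal.coe_mul]
          congr 2
          have h34 : (3 / 4 : ℝ≥0) ^ k = (3 / 2) ^ k / 2 ^ k := by rw [← div_pow]; norm_num
          rw [h34]
          ring
  · refine ⟨(r - dist x y) / 2, half_pos (sub_dist_pos_of_mem_whitneyLayer hr hx),
      by linarith [dist_nonneg (x := x) (y := y)], ball_subset_ball_diff_of_mem_whitneyLayer hx,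
      (measure_mono inter_subset_right).trans ?_⟩
    rw [withDensity_apply _ measurableSet_ball, Measure.smul_apply, smul_eq_mul]
    exact hw.lintegral_sub_div_le_of_mem_whitneyLayer hη hr hx hΩ

lemma lintegral_sub_div_le (hw : HasRelOscLE ν w Ω δ) (hη : decayRatio E δ ≤ 1 / 4) {y : E}
    {r : ℝ} (hr : 0 < r) (hΩ : ball y r ⊆ Ω) :
    ∫⁻ z in ball y r, ENNReal.ofReal ((ballMean ν w y r - w z) / w z) ∂ν ≤
      (280 * besicovitchConst E * (finrank ℝ E + 1) * decayRatio E δ : ℝ≥0) * ν (ball y r) := by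
  have hgeom : ∑' k : ℕ, (((3 / 4) ^ k : ℝ≥0) : ℝ≥0∞) = 4 := by
    have hlt : (3 / 4 : ℝ≥0) < 1 := by rw [← NNReal.coe_lt_coe]; norm_num
    have hsub : (1 - 3 / 4 : ℝ≥0) = 4⁻¹ := tsub_eq_of_eq_add (by norm_num)
    rw [← ENNReal.coe_tsum (NNReal.summable_geometric hlt), NNReal.tsum_geometric hlt, hsub]
    simp
  set g : E → ℝ≥0∞ := fun z => ENNReal.ofReal ((ballMean ν w y r - w z) / w z)
  set c : ℝ≥0 := 70 * besicovitchConst E * (finrank ℝ E + 1) * decayRatio E δ with hc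
  calc ∫⁻ z in ball y r, g z ∂ν = ν.withDensity g (ball y r) :=
        (withDensity_apply _ measurableSet_ball).symm
    _ ≤ ν.withDensity g (⋃ k, whitneyLayer y r k) :=
        measure_mono (ball_subset_iUnion_whitneyLayer y r)
    _ ≤ ∑' k, ν.withDensity g (whitneyLayer y r k) := measure_iUnion_le _
    _ ≤ ∑' k : ℕ, c * ((3 / 4) ^ k : ℝ≥0) * ν (ball y r) :=
        ENNReal.tsum_le_tsum fun k => by
          rw [← ENNReal.coe_mul]
          exact hw.withDensity_sub_div_whitneyLayer_le hη hr hΩ k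
    _ = _ := by
        rw [ENNReal.tsum_mul_right, ENNReal.tsum_mul_left, hgeom, hc]
        push_cast
        ring

lemma lintegral_abs_inv_sub_inv_le (hw : HasRelOscLE ν w Ω δ)
    (hδ : reciprocalOscConst E * δ ≤ 1 / 2) {y : E} {r : ℝ} (hr : 0 < r) (hΩ : ball y r ⊆ Ω) :
    ∫⁻ x in ball y r, ENNReal.ofReal |(w x)⁻¹ - (ballMean ν w y r)⁻¹| ∂ν ≤
      ENNReal.ofReal (ballMean ν w y r)⁻¹ *
        ((reciprocalOscConst E * δ : ℝ≥0) * ν (ball y r)) := by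
  set m := ballMean ν w y r
  rcases (ballMean_nonneg (ν := ν) hw.nonneg y r).eq_or_lt with hm | hm
  · have hzero : (fun x => ENNReal.ofReal |(w x)⁻¹ - m⁻¹|) =ᵐ[ν.restrict (ball y r)] 0 := by
      filter_upwards [ae_eq_zero_of_ballMean_eq_zero hw.nonneg hw.locallyIntegrable hm.symm]
        with x hx
      simp [hx, m, ← hm]
    rw [lintegral_congr_ae hzero]
    simp
  have hosc : AEMeasurable (fun x => ENNReal.ofReal (|w x - m| / m)) (ν.restrict (ball y r)) :=
    ((integrableOn_abs_sub_const measure_ball_lt_top.ne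
      (integrableOn_ball hw.locallyIntegrable y r) m).div_const m).aemeasurable.ennreal_ofReal
  calc ∫⁻ x in ball y r, ENNReal.ofReal |(w x)⁻¹ - m⁻¹| ∂ν
      ≤ ∫⁻ x in ball y r, ENNReal.ofReal m⁻¹ *
          (ENNReal.ofReal ((m - w x) / w x) + ENNReal.ofReal (|w x - m| / m)) ∂ν :=
        lintegral_mono fun x => ofReal_abs_inv_sub_inv_le (hw.nonneg x) hm
    _ = ENNReal.ofReal m⁻¹ * (∫⁻ x in ball y r, ENNReal.ofReal ((m - w x) / w x) ∂ν +
          ∫⁻ x in ball y r, ENNReal.ofReal (|w x - m| / m) ∂ν) := by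
        rw [lintegral_const_mul' _ _ ENNReal.ofReal_ne_top, lintegral_add_right' _ hosc]
    _ ≤ ENNReal.ofReal m⁻¹ * ((reciprocalOscConst E * δ : ℝ≥0) * ν (ball y r)) := by
        rw [reciprocalOscConst_mul, ENNReal.coe_add, add_mul]
        gcongr
        · exact hw.lintegral_sub_div_le (decayRatio_le_of_reciprocalOscConst_mul_le hδ) hr hΩ
        · exact hw.lintegral_abs_sub_div_le hr hΩ

lemma integral_abs_inv_sub_inv_le (hw : HasRelOscLE ν w Ω δ)
    (hδ : reciprocalOscConst E * δ ≤ 1 / 2) {y : E} {r : ℝ} (hr : 0 < r) (hΩ : ball y r ⊆ Ω)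
    (hinv : IntegrableOn w⁻¹ (ball y r) ν) :
    ∫ x in ball y r, |w⁻¹ x - (ballMean ν w y r)⁻¹| ∂ν ≤
      (reciprocalOscConst E * δ : ℝ≥0) * (ν.real (ball y r) * (ballMean ν w y r)⁻¹) := by
  have hm : 0 ≤ (ballMean ν w y r)⁻¹ := inv_nonneg.2 (ballMean_nonneg hw.nonneg y r)
  rw [← ENNReal.ofReal_le_ofReal_iff (by positivity), ofReal_integral_eq_lintegral_ofReal
    (integrableOn_abs_sub_const measure_ball_lt_top.ne hinv _) (ae_of_all _ fun _ => abs_nonneg _)]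
  refine (hw.lintegral_abs_inv_sub_inv_le hδ hr hΩ).trans_eq ?_
  rw [ENNReal.ofReal_mul (NNReal.coe_nonneg _), ENNReal.ofReal_mul measureReal_nonneg,
    ENNReal.ofReal_coe_nnreal, ofReal_measureReal measure_ball_lt_top.ne]
  ring

lemma integral_abs_inv_sub_ballMean_inv_le (hw : HasRelOscLE ν w Ω δ) {y : E} {r : ℝ}
    (hr : 0 < r) (hΩ : ball y r ⊆ Ω) (hinv : IntegrableOn w⁻¹ (ball y r) ν) :
    ∫ x in ball y r, |w⁻¹ x - ballMean ν w⁻¹ y r| ∂ν ≤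
      (4 * reciprocalOscConst E * δ : ℝ≥0) * ∫ x in ball y r, w⁻¹ x ∂ν := by
  have hinv₀ : 0 ≤ w⁻¹ := fun x => inv_nonneg.2 (hw.nonneg x)
  have hconst : ((4 * reciprocalOscConst E * δ : ℝ≥0) : ℝ) =
      4 * (reciprocalOscConst E * δ : ℝ≥0) := by
    push_cast
    ring
  rw [hconst]
  rcases le_total (reciprocalOscConst E * δ) (1 / 2) with hsmall | hlarge
  · exact integral_abs_sub_setAverage_le_of_integral_abs_sub_le measure_ball_lt_top.ne hinv
      (NNReal.coe_nonneg _) (by exact_mod_cast hsmall)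
      (hw.integral_abs_inv_sub_inv_le hsmall hr hΩ hinv)
  · refine (integral_abs_sub_setAverage_le_two_mul_integral measure_ball_lt_top.ne hinv
      hinv₀).trans (mul_le_mul_of_nonneg_right ?_ (integral_nonneg hinv₀))
    have hlarge' : (1 / 2 : ℝ) ≤ (reciprocalOscConst E * δ : ℝ≥0) := by exact_mod_cast hlarge
    linarith

end HasRelOscLE

end Weight

section Euclidean

variable {n : ℕ} {Ω : Set (En n)}

lemma ofReal_le_wBMO (μ f : En n → ℝ) {y : En n} {r : ℝ} (hr : 0 < r) (hΩ : ball y r ⊆ Ω) :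
    ENNReal.ofReal ((∫ x in ball y r, |f x - ballAvg n f y r|) / ∫ x in ball y r, μ x) ≤
      wBMO n Ω μ f :=
  le_iSup₂_of_le y r (le_iSup₂_of_le hr hΩ le_rfl)

lemma wBMO_le_of_forall_integrableOn {μ f : En n → ℝ} {C : ℝ≥0∞}
    (h : ∀ y r, 0 < r → ball y r ⊆ Ω → IntegrableOn μ (ball y r) →
      ENNReal.ofReal ((∫ x in ball y r, |f x - ballAvg n f y r|) / ∫ x in ball y r, μ x) ≤ C) :
    wBMO n Ω μ f ≤ C := by
  refine iSup₂_le fun y r => iSup₂_le fun hr hΩ => ?_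
  by_cases hμ : IntegrableOn μ (ball y r)
  · exact h y r hr hΩ hμ
  · -- A ball on which `μ` is not integrable contributes the junk value `x / 0 = 0`.
    rw [integral_undef hμ, div_zero, ENNReal.ofReal_zero]
    exact zero_le

lemma hasRelOscLE_of_wBMO_le {μ : En n → ℝ} {δ : ℝ≥0} (hμ₀ : 0 ≤ μ)
    (hμ : LocallyIntegrable μ) (h : wBMO n Ω μ μ ≤ δ) : HasRelOscLE volume μ Ω δ where
  nonneg := hμ₀
  locallyIntegrable := hμ
  integral_abs_sub_le y r hr hΩ := by
    rcases (integral_nonneg hμ₀ : 0 ≤ ∫ x in ball y r, μ x).eq_or_lt with hzero | hpos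
    · rw [← hzero, mul_zero, ← mul_zero 2, hzero]
      exact integral_abs_sub_setAverage_le_two_mul_integral measure_ball_lt_top.ne
        (integrableOn_ball hμ y r) hμ₀
    · rw [← div_le_iff₀ hpos, ← ENNReal.ofReal_le_ofReal_iff δ.coe_nonneg,
        ENNReal.ofReal_coe_nnreal]
      exact (ofReal_le_wBMO μ μ hr hΩ).trans h

end Euclidean

theorem statement14_general (n : ℕ) :
    ∃ N > (0 : ℝ), ∀ μ : En n → ℝ, (∀ x, 0 ≤ μ x) → LocallyIntegrable μ →
      ∀ (Ω : Set (En n)) (y : En n) (r : ℝ), 0 < r → ball y r ⊆ Ω →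
        IntegrableOn (fun x => (μ x)⁻¹) (ball y r) →
        ENNReal.ofReal
          ((∫ x in ball y r, |(μ x)⁻¹ - ballAvg n (fun x => (μ x)⁻¹) y r|) /
            ∫ x in ball y r, (μ x)⁻¹) ≤ ENNReal.ofReal N * wBMO n Ω μ μ := by
  have hK : 0 < 4 * reciprocalOscConst (En n) := by
    rw [reciprocalOscConst]
    positivity
  refine ⟨(4 * reciprocalOscConst (En n) : ℝ≥0), NNReal.coe_pos.2 hK,
    fun μ hμ₀ hμ Ω y r hr hΩ hinv => ?_⟩
  rw [ENNReal.ofReal_coe_nnreal]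
  rcases eq_or_ne (wBMO n Ω μ μ) ∞ with htop | hfin
  · rw [htop, ENNReal.mul_top (ENNReal.coe_ne_zero.2 hK.ne')]
    exact le_top
  lift wBMO n Ω μ μ to ℝ≥0 using hfin with δ hδ
  rw [← ENNReal.coe_mul, ← ENNReal.ofReal_coe_nnreal]
  exact ENNReal.ofReal_le_ofReal (div_le_of_le_mul₀
    (integral_nonneg fun x => inv_nonneg.2 (hμ₀ x)) (NNReal.coe_nonneg _)
    ((hasRelOscLE_of_wBMO_le hμ₀ hμ hδ.ge).integral_abs_inv_sub_ballMean_inv_le hr hΩ hinv))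

/-- Weighted mean oscillation of the reciprocal of an `A₂` weight (Lemma 2.9). -/
theorem statement14
    (n : ℕ) (hn : 0 < n) (K₀ : ℝ) (hK₀ : 1 ≤ K₀) :
    ∃ N > (0 : ℝ),
      ∀ μ : En n → ℝ,
        (∀ x, 0 ≤ μ x) → LocallyIntegrable μ →
        apNorm n 2 μ ≤ ENNReal.ofReal K₀ →
        ∀ R₀ : ℝ, 0 < R₀ →
          wBMO n (ball (0 : En n) R₀) (fun x => (μ x)⁻¹) (fun x => (μ x)⁻¹) ≤
            ENNReal.ofReal N * wBMO n (ball (0 : En n) R₀) μ μ := by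
  obtain ⟨N, hN, h⟩ := statement14_general n
  exact ⟨N, hN, fun μ hμ₀ hμ _ R₀ _ => wBMO_le_of_forall_integrableOn (h μ hμ₀ hμ (ball 0 R₀))⟩

end
end

section
/- Let n ∈ ℕ and define φ : ℝⁿ\{0} → ℝ by φ(x) = −ln|x| if |x| ≤ e^{−1} and φ(x) = 1 otherwise. There exists a constant N = N(n) > 0 such that for every r₀ ∈ (0, 1/(10e)), one has [[φ]]_{BMO(B_{r₀}, φ)} ≤ N / |ln(4r₀)|; that is, for every ball B_r(x₀) ⊂ B_{r₀}, (1/φ(B_r(x₀))) ∫_{B_r(x₀)} |φ(x) − (φ)_{B_r(x₀)}| dx ≤ N / |ln(4r₀)|. -/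
open MeasureTheory Metric Set
open scoped ENNReal Topology

noncomputable section

/-- The logarithmic weight `φ(x) = −ln|x|` for `|x| ≤ e⁻¹`, and `φ(x) = 1` otherwise. -/
def logWeight (n : ℕ) : En n → ℝ :=
  fun x => if ‖x‖ ≤ Real.exp (-1) then -Real.log ‖x‖ else 1

/-!
On a ball `B_r(x₀)` put `R = ‖x₀‖ + r`. The mean of `|log ‖x‖ - log R|` over the ball is bounded
by a dimensional constant: if `2 r ≤ ‖x₀‖`, then `‖x‖` lies between `R / 3` and `R`; otherwise
`R ≤ 3 r` and the ball sits inside `B_R(0)`, where dilation reduces the integral to the unit ball.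
Almost everywhere the weight is the truncation `φ = max (-log ‖x‖) 1`, which oscillates no more
than `log ‖x‖`, so the unweighted mean oscillation of `φ` is bounded on all balls. The gain comes
only from the weight in the denominator: on `B_{r₀}` it is at least `max (-log r₀) 1`.
-/

section MeanOscillation

variable {α F : Type*} [MeasurableSpace α] [NormedAddCommGroup F] [NormedSpace ℝ F]
  [CompleteSpace F]

lemma integral_norm_sub_average_le_two_mul {μ : Measure α} [IsFiniteMeasure μ] {f : α → F}
    (hf : Integrable f μ) (c : F) :
    ∫ x, ‖f x - ⨍ y, f y ∂μ‖ ∂μ ≤ 2 * ∫ x, ‖f x - c‖ ∂μ := by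
  have hfc : Integrable (fun x => ‖f x - c‖) μ := (hf.sub (integrable_const c)).norm
  have hconst : ∫ _, ‖c - ⨍ y, f y ∂μ‖ ∂μ ≤ ∫ x, ‖f x - c‖ ∂μ :=
    calc ∫ _, ‖c - ⨍ y, f y ∂μ‖ ∂μ = ‖∫ _, (⨍ y, f y ∂μ) - c ∂μ‖ := by
          simp [norm_smul, norm_sub_rev c, abs_of_nonneg]
      _ = ‖∫ x, f x - c ∂μ‖ := by
          rw [integral_sub (integrable_const _) (integrable_const _), integral_average,
            integral_sub hf (integrable_const _)]
      _ ≤ ∫ x, ‖f x - c‖ ∂μ := norm_integral_le_integral_norm _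
  calc ∫ x, ‖f x - ⨍ y, f y ∂μ‖ ∂μ
      ≤ ∫ x, ‖f x - c‖ + ‖c - ⨍ y, f y ∂μ‖ ∂μ :=
        integral_mono (hf.sub (integrable_const _)).norm (hfc.add (integrable_const _))
          fun x => norm_sub_le_norm_sub_add_norm_sub (f x) c _
    _ = ∫ x, ‖f x - c‖ ∂μ + ∫ _, ‖c - ⨍ y, f y ∂μ‖ ∂μ := integral_add hfc (integrable_const _)
    _ ≤ 2 * ∫ x, ‖f x - c‖ ∂μ := by linarith

end MeanOscillation

section LogNorm

variable {E : Type*} [NormedAddCommGroup E]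

lemma ball_subset_ball_zero_norm_add (x₀ : E) (r : ℝ) : ball x₀ r ⊆ ball 0 (‖x₀‖ + r) :=
  ball_subset_ball' (by rw [dist_zero_right, add_comm])

lemma abs_log_norm_sub_log_norm_add_le {x₀ x : E} {r : ℝ} (hr : 2 * r ≤ ‖x₀‖)
    (hx : x ∈ ball x₀ r) : |Real.log ‖x‖ - Real.log (‖x₀‖ + r)| ≤ Real.log 3 := by
  have hxr : ‖x - x₀‖ < r := mem_ball_iff_norm.1 hx
  have hr_pos : 0 < r := (norm_nonneg _).trans_lt hxr
  have hlower : ‖x₀‖ + r ≤ 3 * ‖x‖ := by linarith [norm_sub_norm_le x₀ x, norm_sub_rev x x₀]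
  have hupper : ‖x‖ ≤ ‖x₀‖ + r := (mem_ball_zero_iff.1 (ball_subset_ball_zero_norm_add x₀ r hx)).le
  have hx_pos : 0 < ‖x‖ := by linarith [norm_nonneg x₀]
  rw [abs_sub_comm, abs_of_nonneg (sub_nonneg.2 (Real.log_le_log hx_pos hupper)), sub_le_iff_le_add,
    ← Real.log_mul three_ne_zero hx_pos.ne']
  exact Real.log_le_log (by positivity) hlower

variable [NormedSpace ℝ E] [FiniteDimensional ℝ E] [MeasurableSpace E] [BorelSpace E]
  [Nontrivial E] (μ : Measure E) [μ.IsAddHaarMeasure]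

lemma integrableOn_log_norm_ball (x₀ : E) (r : ℝ) :
    IntegrableOn (fun x => Real.log ‖x‖) (ball x₀ r) μ := by
  refine IntegrableOn.mono_set ?_ (ball_subset_ball_zero_norm_add x₀ r)
  rw [integrableOn_fun_norm_addHaar μ]
  have hint : IntervalIntegrable
      (fun t : ℝ => t ^ (Module.finrank ℝ E - 1) * Real.log t) volume 0 (‖x₀‖ + r) :=
    intervalIntegral.intervalIntegrable_log'.continuousOn_mul (by fun_prop)
  exact hint.1.mono_set Ioo_subset_Ioc_self

lemma integrableOn_abs_log_norm_sub_ball (c : ℝ) (x₀ : E) (r : ℝ) :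
    IntegrableOn (fun x => |Real.log ‖x‖ - c|) (ball x₀ r) μ :=
  ((integrableOn_log_norm_ball μ x₀ r).sub (integrableOn_const measure_ball_lt_top.ne)).abs

lemma setIntegral_ball_zero_abs_log_norm_sub_log {R : ℝ} (hR : 0 < R) :
    ∫ x in ball (0 : E) R, |Real.log ‖x‖ - Real.log R| ∂μ =
      R ^ Module.finrank ℝ E * ∫ y in ball (0 : E) 1, |Real.log ‖y‖| ∂μ := by
  have hscale : ∫ y in ball (0 : E) 1, |Real.log ‖R • y‖ - Real.log R| ∂μ =
      ∫ y in ball (0 : E) 1, |Real.log ‖y‖| ∂μ := by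
    refine integral_congr_ae (ae_restrict_of_ae ?_)
    filter_upwards [Measure.ae_ne μ 0] with y hy
    rw [norm_smul, Real.norm_of_nonneg hR.le, Real.log_mul hR.ne' (norm_ne_zero_iff.2 hy),
      add_sub_cancel_left]
  rw [← hscale, Measure.setIntegral_comp_smul_of_pos μ (fun x => |Real.log ‖x‖ - Real.log R|) _ hR,
    smul_unitBall_of_pos hR, smul_eq_mul, mul_inv_cancel_left₀ (by positivity)]

lemma setIntegral_ball_abs_log_norm_sub_le_of_two_mul_le_norm {x₀ : E} {r : ℝ}
    (hr : 2 * r ≤ ‖x₀‖) :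
    ∫ x in ball x₀ r, |Real.log ‖x‖ - Real.log (‖x₀‖ + r)| ∂μ ≤
      Real.log 3 * μ.real (ball x₀ r) :=
  calc ∫ x in ball x₀ r, |Real.log ‖x‖ - Real.log (‖x₀‖ + r)| ∂μ
      ≤ ∫ _ in ball x₀ r, Real.log 3 ∂μ :=
        setIntegral_mono_on (integrableOn_abs_log_norm_sub_ball μ _ x₀ r)
          (integrableOn_const measure_ball_lt_top.ne) measurableSet_ball
          fun _ => abs_log_norm_sub_log_norm_add_le hr
    _ = Real.log 3 * μ.real (ball x₀ r) := by rw [setIntegral_const, smul_eq_mul, mul_comm]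

lemma setIntegral_ball_abs_log_norm_sub_le_of_norm_le_two_mul {x₀ : E} {r : ℝ} (hr : 0 < r)
    (hx₀ : ‖x₀‖ ≤ 2 * r) :
    ∫ x in ball x₀ r, |Real.log ‖x‖ - Real.log (‖x₀‖ + r)| ∂μ ≤
      3 ^ Module.finrank ℝ E * (⨍ y in ball (0 : E) 1, |Real.log ‖y‖| ∂μ) *
        μ.real (ball x₀ r) := by
  have hunit : μ.real (ball (0 : E) 1) * (⨍ y in ball (0 : E) 1, |Real.log ‖y‖| ∂μ) =
      ∫ y in ball (0 : E) 1, |Real.log ‖y‖| ∂μ :=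
    measure_smul_setAverage _ measure_ball_lt_top.ne
  calc ∫ x in ball x₀ r, |Real.log ‖x‖ - Real.log (‖x₀‖ + r)| ∂μ
      ≤ ∫ x in ball 0 (‖x₀‖ + r), |Real.log ‖x‖ - Real.log (‖x₀‖ + r)| ∂μ :=
        setIntegral_mono_set (integrableOn_abs_log_norm_sub_ball μ _ 0 _)
          (.of_forall fun _ => abs_nonneg _) (ball_subset_ball_zero_norm_add x₀ r).eventuallyLE
    _ = (‖x₀‖ + r) ^ Module.finrank ℝ E * ∫ y in ball (0 : E) 1, |Real.log ‖y‖| ∂μ :=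
        setIntegral_ball_zero_abs_log_norm_sub_log μ (by positivity)
    _ ≤ (3 * r) ^ Module.finrank ℝ E * ∫ y in ball (0 : E) 1, |Real.log ‖y‖| ∂μ := by
        gcongr
        linarith
    _ = 3 ^ Module.finrank ℝ E * (⨍ y in ball (0 : E) 1, |Real.log ‖y‖| ∂μ) *
          μ.real (ball x₀ r) := by
        rw [← hunit, ← Measure.addHaar_real_closedBall_eq_addHaar_real_ball μ x₀,
          Measure.addHaar_real_closedBall μ x₀ hr.le, mul_pow]
        ring

theorem exists_forall_setIntegral_ball_abs_log_norm_sub_le :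
    ∃ C > 0, ∀ (x₀ : E) (r : ℝ), 0 < r →
      ∫ x in ball x₀ r, |Real.log ‖x‖ - Real.log (‖x₀‖ + r)| ∂μ ≤ C * μ.real (ball x₀ r) := by
  refine ⟨max (Real.log 3) (3 ^ Module.finrank ℝ E * ⨍ y in ball (0 : E) 1, |Real.log ‖y‖| ∂μ),
    lt_max_of_lt_left (Real.log_pos (by norm_num)), fun x₀ r hr => ?_⟩
  rcases le_total (2 * r) ‖x₀‖ with hfar | hnear
  · refine (setIntegral_ball_abs_log_norm_sub_le_of_two_mul_le_norm μ hfar).trans ?_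
    gcongr
    exact le_max_left _ _
  · refine (setIntegral_ball_abs_log_norm_sub_le_of_norm_le_two_mul μ hr hnear).trans ?_
    gcongr
    exact le_max_right _ _

end LogNorm

lemma wBMO_le_ofReal_iff {n : ℕ} {Ω : Set (En n)} {μ f : En n → ℝ} {c : ℝ} (hc : 0 ≤ c) :
    wBMO n Ω μ f ≤ ENNReal.ofReal c ↔
      ∀ (x₀ : En n) (r : ℝ), 0 < r → ball x₀ r ⊆ Ω →
        (∫ x in ball x₀ r, |f x - ballAvg n f x₀ r|) / (∫ x in ball x₀ r, μ x) ≤ c := by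
  simp only [wBMO, iSup_le_iff, ENNReal.ofReal_le_ofReal_iff hc]

section LogWeight

-- Excluded point: `Real.log 0 = 0` makes `logWeight n 0 = 0`.
lemma logWeight_eq_max {n : ℕ} {x : En n} (hx : x ≠ 0) :
    logWeight n x = max (-Real.log ‖x‖) 1 := by
  have hexp : ‖x‖ ≤ Real.exp (-1) ↔ 1 ≤ -Real.log ‖x‖ := by
    rw [← Real.log_le_iff_le_exp (norm_pos_iff.2 hx), le_neg]
  by_cases h : ‖x‖ ≤ Real.exp (-1)
  · rw [logWeight, if_pos h, max_eq_left (hexp.1 h)]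
  · rw [logWeight, if_neg h, max_eq_right (le_of_not_ge (mt hexp.2 h))]

variable {n : ℕ} [NeZero n]

lemma logWeight_ae_eq_max (s : Set (En n)) :
    logWeight n =ᵐ[volume.restrict s] fun x => max (-Real.log ‖x‖) 1 :=
  ae_restrict_of_ae ((Measure.ae_ne volume 0).mono fun _ => logWeight_eq_max)

lemma integrableOn_logWeight_ball (x₀ : En n) (r : ℝ) :
    IntegrableOn (logWeight n) (ball x₀ r) :=
  Integrable.congr
    ((integrableOn_log_norm_ball volume x₀ r).neg.sup
      (integrableOn_const measure_ball_lt_top.ne))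
    (logWeight_ae_eq_max _).symm

lemma setIntegral_ball_abs_logWeight_sub_ballAvg_le (x₀ : En n) (r c : ℝ) :
    ∫ x in ball x₀ r, |logWeight n x - ballAvg n (logWeight n) x₀ r| ≤
      2 * ∫ x in ball x₀ r, |Real.log ‖x‖ - c| := by
  have hint := integrableOn_logWeight_ball x₀ r
  -- `max · 1` is 1-Lipschitz, so it does not increase the oscillation of `-log ‖x‖` around `-c`.
  have htrunc : ∫ x in ball x₀ r, |logWeight n x - max (-c) 1| ≤
      ∫ x in ball x₀ r, |Real.log ‖x‖ - c| := by
    refine integral_mono_ae (hint.sub (integrableOn_const measure_ball_lt_top.ne)).abs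
      (integrableOn_abs_log_norm_sub_ball volume c x₀ r) ?_
    filter_upwards [logWeight_ae_eq_max (ball x₀ r)] with x hx
    rw [hx, ← abs_neg (Real.log ‖x‖ - c), neg_sub']
    exact abs_max_sub_max_le_abs _ _ _
  have : IsFiniteMeasure (volume.restrict (ball x₀ r)) :=
    isFiniteMeasure_restrict.2 measure_ball_lt_top.ne
  exact (integral_norm_sub_average_le_two_mul hint (max (-c) 1)).trans
    (mul_le_mul_of_nonneg_left htrunc zero_le_two)

lemma max_neg_log_one_mul_le_setIntegral_logWeight {x₀ : En n} {r r₀ : ℝ}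
    (hsub : ball x₀ r ⊆ ball 0 r₀) :
    max (-Real.log r₀) 1 * volume.real (ball x₀ r) ≤ ∫ x in ball x₀ r, logWeight n x :=
  calc max (-Real.log r₀) 1 * volume.real (ball x₀ r)
      = ∫ _ in ball x₀ r, max (-Real.log r₀) 1 := by rw [setIntegral_const, smul_eq_mul, mul_comm]
    _ ≤ ∫ x in ball x₀ r, logWeight n x := by
      refine integral_mono_ae (integrableOn_const measure_ball_lt_top.ne)
        (integrableOn_logWeight_ball x₀ r) ?_
      filter_upwards [ae_restrict_mem measurableSet_ball,
        ae_restrict_of_ae (Measure.ae_ne volume 0)] with x hx hx_ne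
      rw [logWeight_eq_max hx_ne]
      have hxr₀ : ‖x‖ ≤ r₀ := (mem_ball_zero_iff.1 (hsub hx)).le
      exact max_le_max_right 1 (neg_le_neg (Real.log_le_log (norm_pos_iff.2 hx_ne) hxr₀))

end LogWeight

lemma div_max_neg_log_one_le_div_abs_log_mul {N a r : ℝ} (hN : 0 ≤ N) (ha : 1 ≤ a) (hr : 0 < r)
    (har : a * r < 1) : N / max (-Real.log r) 1 ≤ N / |Real.log (a * r)| := by
  have hlog : Real.log (a * r) < 0 := Real.log_neg (by positivity) har
  have hle : |Real.log (a * r)| ≤ -Real.log r := by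
    rw [abs_of_neg hlog]
    exact neg_le_neg (Real.log_le_log hr (le_mul_of_one_le_left hr.le ha))
  exact div_le_div_of_nonneg_left hN (abs_pos.2 hlog.ne) (le_max_of_le_left hle)

lemma four_mul_lt_one_of_lt_one_div_ten_mul_exp_one {r : ℝ} (hr : r < 1 / (10 * Real.exp 1)) :
    4 * r < 1 := by
  have : 1 / (10 * Real.exp 1) < 1 / (10 * 2) := by
    gcongr
    exact Real.exp_one_gt_two
  linarith

theorem statement18_general (n : ℕ) (hn : 0 < n) :
    ∃ N > (0 : ℝ), ∀ r₀ : ℝ,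
      wBMO n (ball (0 : En n) r₀) (logWeight n) (logWeight n) ≤
        ENNReal.ofReal (N / max (-Real.log r₀) 1) := by
  have : NeZero n := ⟨hn.ne'⟩
  obtain ⟨C, hC, hosc⟩ :=
    exists_forall_setIntegral_ball_abs_log_norm_sub_le (volume : Measure (En n))
  refine ⟨2 * C, by positivity, fun r₀ => ?_⟩
  refine (wBMO_le_ofReal_iff (by positivity)).2 fun x₀ r hr hsub => ?_
  have hvol : 0 < volume.real (ball x₀ r) :=
    ENNReal.toReal_pos (measure_ball_pos volume x₀ hr).ne' measure_ball_lt_top.ne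
  calc (∫ x in ball x₀ r, |logWeight n x - ballAvg n (logWeight n) x₀ r|) /
        (∫ x in ball x₀ r, logWeight n x)
      ≤ (2 * (C * volume.real (ball x₀ r))) / (max (-Real.log r₀) 1 * volume.real (ball x₀ r)) := by
        gcongr
        · exact (setIntegral_ball_abs_logWeight_sub_ballAvg_le x₀ r _).trans
            (by gcongr; exact hosc x₀ r hr)
        · exact max_neg_log_one_mul_le_setIntegral_logWeight hsub
    _ = 2 * C / max (-Real.log r₀) 1 := by rw [← mul_assoc, mul_div_mul_right _ _ hvol.ne']

/-- Smallness of the weighted mean oscillation of the logarithmic weight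
(Remark 1.2 (b), estimate (1.7)). -/
theorem statement18 (n : ℕ) (hn : 0 < n) :
    ∃ N > (0 : ℝ),
      ∀ r₀ : ℝ, 0 < r₀ → r₀ < 1 / (10 * Real.exp 1) →
        wBMO n (ball (0 : En n) r₀) (logWeight n) (logWeight n) ≤
            ENNReal.ofReal (N / |Real.log (4 * r₀)|) ∧
        ∀ (x₀ : En n) (r : ℝ), 0 < r → ball x₀ r ⊆ ball (0 : En n) r₀ →
          (∫ x in ball x₀ r, |logWeight n x - ballAvg n (logWeight n) x₀ r|) /
              (∫ x in ball x₀ r, logWeight n x) ≤ N / |Real.log (4 * r₀)| := by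
  obtain ⟨N, hN, hgeneral⟩ := statement18_general n hn
  refine ⟨N, hN, fun r₀ hr₀ hr₀_lt => ?_⟩
  have hbound := (hgeneral r₀).trans <| ENNReal.ofReal_le_ofReal <|
    div_max_neg_log_one_le_div_abs_log_mul hN.le (by norm_num) hr₀
      (four_mul_lt_one_of_lt_one_div_ten_mul_exp_one hr₀_lt)
  exact ⟨hbound, (wBMO_le_ofReal_iff (by positivity)).1 hbound⟩

end
end
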